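/- Let d ≥ 2, p ≥ 1, s ∈ (0,1] with sp > 1. There exists C = C(s, p, d) such that for all M > 0, ϑ ∈ (0,1], and every Lipschitz u on the closure of ℝ^d_{M+} lying in 𝔚^{s,p}_ϑ(ℝ^d_{M+}), the Gagliardo seminorm of the trace satisfies ∫_{ℝ^{d-1}} ∫_{ℝ^{d-1}} |u(x',0) - u(y',0)|^p / |x' - y'|^{d + ps - 2} dx' dy' ≤ C ( M^{-ps} ‖u‖^p_{L^p(ℝ^d_{M+})} + ϑ^{ps-p} |u|^p_{𝔚^{s,p}_ϑ(ℝ^d_{M+})} ). -/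

import Mathlib

open MeasureTheory
open scoped ENNReal NNReal

/-- The localized nonlocal seminorm (to the `p`-th power) on the stripe
`ℝ^{d-1} × (0,M]` with horizon parameter `τ`. -/
noncomputable def stripeSemi (d : ℕ) (S : Set ℝ) (τ p s : ℝ)
    (u : EuclideanSpace ℝ (Fin (d - 1)) → ℝ → ℝ) : ℝ≥0∞ :=
  ∫⁻ x' : EuclideanSpace ℝ (Fin (d - 1)), ∫⁻ xd in S,
    ∫⁻ y' : EuclideanSpace ℝ (Fin (d - 1)),
      ∫⁻ yd in S ∩ {t : ℝ | dist y' x' ^ 2 + (t - xd) ^ 2 < (τ * xd) ^ 2},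
        ENNReal.ofReal (|u y' yd - u x' xd| ^ p / (τ * xd) ^ ((d : ℝ) + p * s))

/-- The `L^p` norm (to the `p`-th power) on the stripe `ℝ^{d-1} × (0,M]`. -/
noncomputable def stripeLp (d : ℕ) (S : Set ℝ) (p : ℝ)
    (u : EuclideanSpace ℝ (Fin (d - 1)) → ℝ → ℝ) : ℝ≥0∞ :=
  ∫⁻ x' : EuclideanSpace ℝ (Fin (d - 1)), ∫⁻ xd in S, ENNReal.ofReal (|u x' xd| ^ p)

/-!
Write the trace as the limit of the horizontal slices of `u` along the dilations `z ↦ μ ^ k • z` of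
a cone with vertex on the trace space. Dilation by `μ < 1` contracts the cone measure
`z.2 ^ (-β) dz` by the factor `μ ^ (β - d)`, where `β = d - 1 + p * s`, so for `1 < s * p` the
increments form a geometric series: the `L^p` distance of the trace to its slices, averaged over the
cone, is controlled by the increment `u ((1 - τ) • z + ·) - u (z + ·)` of one dilation. The latter
compares points at distance less than `ϑ * z.2` when `τ` lies in `(ϑ / 5, 2 * ϑ / 5)`, and averaging
over these `τ` turns it into the nonlocal seminorm. In the Gagliardo seminorm of the trace, a
pair `x, y` with `dist x y < M / 2` is joined through slices in the cone at height comparable to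
`dist x y`; the remaining pairs are controlled by the `L^p` norm of the trace, which is joined to
slices at height comparable to `M`.
-/

section Iteration

variable {α F : Type*} {mα : MeasurableSpace α} [NormedAddCommGroup F] {m : Measure α}
  {T : α → α} {c p : ℝ≥0∞} {v : α → F}

theorem eLpNorm_comp_le_of_map_le_smul (hT : Measurable T) (hmT : m.map T ≤ c • m) (hp : p ≠ ∞)
    (hv : StronglyMeasurable v) : eLpNorm (v ∘ T) p m ≤ c ^ (1 / p).toReal * eLpNorm v p m :=
  calc eLpNorm (v ∘ T) p m = eLpNorm v p (m.map T) :=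
        (eLpNorm_map_measure hv.aestronglyMeasurable hT.aemeasurable).symm
    _ ≤ eLpNorm v p (c • m) := eLpNorm_mono_measure v hmT
    _ = c ^ (1 / p).toReal * eLpNorm v p m := eLpNorm_smul_measure_of_ne_top hp v c

theorem eLpNorm_comp_iterate_le_of_map_le_smul (hT : Measurable T) (hmT : m.map T ≤ c • m)
    (hp : p ≠ ∞) (hv : StronglyMeasurable v) (k : ℕ) :
    eLpNorm (v ∘ T^[k]) p m ≤ (c ^ (1 / p).toReal) ^ k * eLpNorm v p m := by
  induction k with
  | zero => simp
  | succ k ih =>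
    calc eLpNorm (v ∘ T^[k + 1]) p m
        ≤ c ^ (1 / p).toReal * eLpNorm (v ∘ T^[k]) p m :=
          eLpNorm_comp_le_of_map_le_smul hT hmT hp (hv.comp_measurable (hT.iterate k))
      _ ≤ c ^ (1 / p).toReal * ((c ^ (1 / p).toReal) ^ k * eLpNorm v p m) := by gcongr
      _ = (c ^ (1 / p).toReal) ^ (k + 1) * eLpNorm v p m := by ring

/- The increments of `k ↦ v ∘ T^[k]` are the compositions `(v ∘ T - v) ∘ T^[j]`, so their norms are
dominated by a geometric series. -/
theorem eLpNorm_comp_iterate_sub_le (hT : Measurable T) (hmT : m.map T ≤ c • m) (hp1 : 1 ≤ p)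
    (hp : p ≠ ∞) (hv : StronglyMeasurable v) (k : ℕ) :
    eLpNorm (v ∘ T^[k] - v) p m ≤ (1 - c ^ (1 / p).toReal)⁻¹ * eLpNorm (v ∘ T - v) p m := by
  have hw : StronglyMeasurable (v ∘ T - v) := (hv.comp_measurable hT).sub hv
  have htelescope : v ∘ T^[k] - v = ∑ j ∈ Finset.range k, (v ∘ T - v) ∘ T^[j] := by
    have h := Finset.sum_range_sub (fun j => v ∘ T^[j]) k
    simp only [Function.iterate_zero, Function.comp_id] at h
    rw [← h]
    exact Finset.sum_congr rfl fun j _ => by rw [Function.iterate_succ']; rfl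
  calc eLpNorm (v ∘ T^[k] - v) p m
      ≤ ∑ j ∈ Finset.range k, eLpNorm ((v ∘ T - v) ∘ T^[j]) p m := by
        rw [htelescope]
        exact eLpNorm_sum_le
          (fun j _ => (hw.comp_measurable (hT.iterate j)).aestronglyMeasurable) hp1
    _ ≤ ∑ j ∈ Finset.range k, (c ^ (1 / p).toReal) ^ j * eLpNorm (v ∘ T - v) p m :=
        Finset.sum_le_sum fun j _ => eLpNorm_comp_iterate_le_of_map_le_smul hT hmT hp hw j
    _ ≤ (1 - c ^ (1 / p).toReal)⁻¹ * eLpNorm (v ∘ T - v) p m := by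
        rw [← Finset.sum_mul, ← ENNReal.tsum_geometric]
        gcongr
        exact ENNReal.sum_le_tsum _

theorem eLpNorm_sub_le_of_tendsto_comp_iterate (hT : Measurable T) (hmT : m.map T ≤ c • m)
    (hp1 : 1 ≤ p) (hp : p ≠ ∞) (hv : StronglyMeasurable v) {w : α → F}
    (hlim : ∀ a, Filter.Tendsto (fun k => v (T^[k] a)) Filter.atTop (nhds (w a))) :
    eLpNorm (w - v) p m ≤ (1 - c ^ (1 / p).toReal)⁻¹ * eLpNorm (v ∘ T - v) p m :=
  calc eLpNorm (w - v) p m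
      ≤ Filter.atTop.liminf fun k => eLpNorm (v ∘ T^[k] - v) p m :=
        Lp.eLpNorm_lim_le_liminf_eLpNorm
          (fun k => ((hv.comp_measurable (hT.iterate k)).sub hv).aestronglyMeasurable) _
          (.of_forall fun a => (hlim a).sub_const (v a))
    _ ≤ (1 - c ^ (1 / p).toReal)⁻¹ * eLpNorm (v ∘ T - v) p m :=
        Filter.liminf_le_of_le (by isBoundedDefault) fun _ h =>
          let ⟨k, hk⟩ := h.exists
          hk.trans (eLpNorm_comp_iterate_sub_le hT hmT hp1 hp hv k)

end Iteration

theorem map_prodMap_id_le_smul {α β : Type*} [MeasurableSpace α] [MeasurableSpace β]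
    {κ : Measure α} [SFinite κ] {f : α → α} {c : ℝ≥0∞} (hf : Measurable f)
    (hκ : κ.map f ≤ c • κ) (ν : Measure β) [SFinite ν] :
    (κ.prod ν).map (Prod.map f id) ≤ c • κ.prod ν := by
  rw [← Measure.map_prod_map _ _ hf measurable_id, Measure.map_id, ← Measure.prod_smul_left]
  exact Measure.prod_mono hκ le_rfl

theorem lintegral_comp_smul {V : Type*} [NormedAddCommGroup V] [NormedSpace ℝ V]
    [FiniteDimensional ℝ V] [MeasurableSpace V] [BorelSpace V] (ν : Measure V)
    [ν.IsAddHaarMeasure] (f : V → ℝ≥0∞) {r : ℝ} (hr : r ≠ 0) :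
    ∫⁻ x, f (r • x) ∂ν = ENNReal.ofReal |(r ^ Module.finrank ℝ V)⁻¹| * ∫⁻ x, f x ∂ν := by
  rw [← smul_eq_mul, ← lintegral_smul_measure, ← Measure.map_addHaar_smul ν hr]
  exact ((MeasurableEquiv.smul₀ r hr).measurableEmbedding.lintegral_map f).symm

theorem lintegral_comp_sub_mul_self (f : ℝ → ℝ≥0∞) {c : ℝ} (hc : 0 < c) :
    ∫⁻ τ, f (c - τ * c) = ENNReal.ofReal c⁻¹ * ∫⁻ t, f t := by
  have h := lintegral_comp_smul volume (fun t => f (c - t)) hc.ne'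
  rw [lintegral_sub_left_eq_self f c] at h
  simpa [mul_comm, abs_of_pos hc] using h

theorem lintegral_lintegral_eq_lintegral_lintegral_add {G : Type*} [AddGroup G]
    [MeasurableSpace G] [MeasurableAdd₂ G] (μ : Measure G) [SFinite μ] [μ.IsAddLeftInvariant]
    {f : G → G → ℝ≥0∞} (hf : Measurable (Function.uncurry f)) :
    ∫⁻ x, ∫⁻ y, f x y ∂μ ∂μ = ∫⁻ h, ∫⁻ x, f x (x + h) ∂μ ∂μ := by
  have hf' : Measurable (Function.uncurry fun x h => f x (x + h)) :=
    hf.comp (measurable_fst.prodMk (measurable_fst.add measurable_snd))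
  rw [← lintegral_lintegral_swap hf'.aemeasurable]
  exact lintegral_congr fun x => (lintegral_add_left_eq_self (f x) x).symm

theorem enorm_sub_rpow_le {F : Type*} [NormedAddCommGroup F] {p : ℝ} (hp : 1 ≤ p)
    (a b c : F) : ‖a - c‖ₑ ^ p ≤ 2 ^ (p - 1) * (‖a - b‖ₑ ^ p + ‖b - c‖ₑ ^ p) :=
  calc ‖a - c‖ₑ ^ p ≤ (‖a - b‖ₑ + ‖b - c‖ₑ) ^ p := by
        gcongr
        simpa using enorm_add_le (a - b) (b - c)
    _ ≤ 2 ^ (p - 1) * (‖a - b‖ₑ ^ p + ‖b - c‖ₑ ^ p) :=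
        ENNReal.rpow_add_le_mul_rpow_add_rpow _ _ hp

theorem ofReal_norm_rpow {F : Type*} [SeminormedAddCommGroup F] (a : F) {p : ℝ} (hp : 0 ≤ p) :
    ENNReal.ofReal (‖a‖ ^ p) = ‖a‖ₑ ^ p := by
  rw [← ENNReal.ofReal_rpow_of_nonneg (norm_nonneg a) hp, ofReal_norm]

theorem ofReal_norm_rpow_div_rpow {F : Type*} [SeminormedAddCommGroup F] (a : F) {p r : ℝ}
    (hp : 0 ≤ p) (hr : 0 ≤ r) (α : ℝ) :
    ENNReal.ofReal (‖a‖ ^ p / r ^ α) = ENNReal.ofReal (r ^ (-α)) * ‖a‖ₑ ^ p := by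
  rw [div_eq_inv_mul, ← Real.rpow_neg hr, ENNReal.ofReal_mul (by positivity),
    ofReal_norm_rpow a hp]

theorem measurable_enorm_sub_rpow_of_continuous {X F : Type*} [TopologicalSpace X]
    [MeasurableSpace X] [OpensMeasurableSpace X] [SeminormedAddCommGroup F] {f g : X → F}
    (hf : Continuous f) (hg : Continuous g) (p : ℝ) : Measurable fun x => ‖f x - g x‖ₑ ^ p :=
  (hf.sub hg).enorm.measurable.pow_const p

section Slices

variable {E F : Type*} [NormedAddCommGroup E] [MeasureSpace E] [NormedAddCommGroup F]

/-- The `p`-th power of the `L^p` distance between the horizontal slices of `u` based at `a` and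
at `b`. It depends on the horizontal components of `a` and `b` only through their difference, so
integrals of differences of `u` over pairs of points reduce to integrals of `sliceEnergy` over
single points. -/
noncomputable def sliceEnergy (u : E × ℝ → F) (p : ℝ) (a b : E × ℝ) : ℝ≥0∞ :=
  ∫⁻ x : E, ‖u (a + (x, 0)) - u (b + (x, 0))‖ₑ ^ p

theorem sliceEnergy_self (u : E × ℝ → F) {p : ℝ} (hp : 0 < p) (a : E × ℝ) :
    sliceEnergy u p a a = 0 := by
  simp [sliceEnergy, hp]

theorem sliceEnergy_comm (u : E × ℝ → F) (p : ℝ) (a b : E × ℝ) :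
    sliceEnergy u p a b = sliceEnergy u p b a := by
  simp only [sliceEnergy, enorm_sub_rev]

/-- The `p`-th power of the `L^p` norm of the horizontal slice of `u` at height `t`. -/
noncomputable def sliceMass (u : E × ℝ → F) (p t : ℝ) : ℝ≥0∞ :=
  ∫⁻ x : E, ‖u (x, t)‖ₑ ^ p

variable [BorelSpace E]

theorem lintegral_enorm_rpow_eq_sliceMass [(volume : Measure E).IsAddLeftInvariant]
    (u : E × ℝ → F) (p : ℝ) (a : E × ℝ) :
    ∫⁻ x : E, ‖u (a + (x, 0))‖ₑ ^ p = sliceMass u p a.2 := by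
  rw [sliceMass, ← lintegral_add_left_eq_self (fun x => ‖u (x, a.2)‖ₑ ^ p) a.1]
  exact lintegral_congr fun x => by rw [Prod.add_def, add_zero]

theorem sliceEnergy_add_horizontal [(volume : Measure E).IsAddLeftInvariant]
    (u : E × ℝ → F) (p : ℝ) (a b : E × ℝ) (h : E) :
    sliceEnergy u p (a + (h, 0)) (b + (h, 0)) = sliceEnergy u p a b := by
  unfold sliceEnergy
  rw [← lintegral_add_left_eq_self (fun x => ‖u (a + (x, 0)) - u (b + (x, 0))‖ₑ ^ p) h]
  simp only [add_assoc, Prod.mk_add_mk, add_zero]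

theorem sliceEnergy_triangle {u : E × ℝ → F} (hu : Continuous u) {p : ℝ} (hp : 1 ≤ p)
    (a b c : E × ℝ) :
    sliceEnergy u p a c ≤ 2 ^ (p - 1) * (sliceEnergy u p a b + sliceEnergy u p b c) := by
  have hab : Measurable fun x : E => ‖u (a + (x, 0)) - u (b + (x, 0))‖ₑ ^ p :=
    measurable_enorm_sub_rpow_of_continuous (by fun_prop) (by fun_prop) p
  simp only [sliceEnergy]
  rw [← lintegral_add_left hab, ← lintegral_const_mul' _ _ (by finiteness)]
  exact lintegral_mono fun x => enorm_sub_rpow_le hp _ _ _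

theorem sliceMass_le [(volume : Measure E).IsAddLeftInvariant] {u : E × ℝ → F}
    (hu : Continuous u) {p : ℝ} (hp : 1 ≤ p) (a b : E × ℝ) :
    sliceMass u p a.2 ≤ 2 ^ (p - 1) * (sliceEnergy u p a b + sliceMass u p b.2) := by
  have hab : Measurable fun x : E => ‖u (a + (x, 0)) - u (b + (x, 0))‖ₑ ^ p :=
    measurable_enorm_sub_rpow_of_continuous (by fun_prop) (by fun_prop) p
  rw [← lintegral_enorm_rpow_eq_sliceMass u p a, ← lintegral_enorm_rpow_eq_sliceMass u p b,
    sliceEnergy, ← lintegral_add_left hab, ← lintegral_const_mul' _ _ (by finiteness)]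
  exact lintegral_mono fun x => by simpa using enorm_sub_rpow_le hp (u (a + (x, 0))) _ 0

theorem sliceEnergy_le_sliceMass [(volume : Measure E).IsAddLeftInvariant] {u : E × ℝ → F}
    (hu : Continuous u) {p : ℝ} (hp : 1 ≤ p) (a b : E × ℝ) :
    sliceEnergy u p a b ≤ 2 ^ (p - 1) * (sliceMass u p a.2 + sliceMass u p b.2) := by
  have ha : Measurable fun x : E => ‖u (a + (x, 0))‖ₑ ^ p :=
    (by fun_prop : Continuous fun x : E => u (a + (x, 0))).enorm.measurable.pow_const p
  rw [← lintegral_enorm_rpow_eq_sliceMass u p a, ← lintegral_enorm_rpow_eq_sliceMass u p b,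
    sliceEnergy, ← lintegral_add_left ha, ← lintegral_const_mul' _ _ (by finiteness)]
  exact lintegral_mono fun x => by simpa using enorm_sub_rpow_le hp (u (a + (x, 0))) 0 _

variable [SecondCountableTopology E] [SFinite (volume : Measure E)]

theorem measurable_sliceEnergy {X : Type*} [MeasurableSpace X] {u : E × ℝ → F}
    (hu : Continuous u) (p : ℝ) {f g : X → E × ℝ} (hf : Measurable f) (hg : Measurable g) :
    Measurable fun x => sliceEnergy u p (f x) (g x) := by
  have h : Measurable fun q : ((E × ℝ) × (E × ℝ)) × E =>
      ‖u (q.1.1 + (q.2, 0)) - u (q.1.2 + (q.2, 0))‖ₑ ^ p :=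
    measurable_enorm_sub_rpow_of_continuous (by fun_prop) (by fun_prop) p
  exact h.lintegral_prod_right'.comp (hf.prodMk hg)

theorem measurable_sliceMass {u : E × ℝ → F} (hu : Continuous u) (p : ℝ) :
    Measurable (sliceMass u p) := by
  have h : Measurable fun q : ℝ × E => ‖u (q.2, q.1)‖ₑ ^ p :=
    (by fun_prop : Continuous fun q : ℝ × E => u (q.2, q.1)).enorm.measurable.pow_const p
  exact h.lintegral_prod_right'

theorem volume_mul_sliceEnergy_le {u : E × ℝ → F} (hu : Continuous u) {p : ℝ} (hp : 1 ≤ p)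
    (a b : E × ℝ) (S : Set (E × ℝ)) :
    volume S * sliceEnergy u p a b ≤
      2 ^ (p - 1) * ((∫⁻ z in S, sliceEnergy u p a z) + ∫⁻ z in S, sliceEnergy u p z b) :=
  calc volume S * sliceEnergy u p a b = ∫⁻ _ in S, sliceEnergy u p a b := by
        rw [setLIntegral_const, mul_comm]
    _ ≤ ∫⁻ z in S, 2 ^ (p - 1) * (sliceEnergy u p a z + sliceEnergy u p z b) :=
        lintegral_mono fun z => sliceEnergy_triangle hu hp a z b
    _ = 2 ^ (p - 1) * ((∫⁻ z in S, sliceEnergy u p a z) + ∫⁻ z in S, sliceEnergy u p z b) := by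
        rw [lintegral_const_mul' _ _ (by finiteness),
          lintegral_add_left (measurable_sliceEnergy hu p measurable_const measurable_id')]

theorem lintegral_trace_eq_lintegral_sliceEnergy [(volume : Measure E).IsAddLeftInvariant]
    {u : E × ℝ → F} (hu : Continuous u) {p : ℝ} (hp : 0 ≤ p) (α : ℝ) :
    ∫⁻ x, ∫⁻ y, ENNReal.ofReal (‖u (x, 0) - u (y, 0)‖ ^ p / dist x y ^ α) =
      ∫⁻ h : E, ENNReal.ofReal (‖h‖ ^ (-α)) * sliceEnergy u p 0 (h, 0) := by
  simp only [ofReal_norm_rpow_div_rpow _ hp dist_nonneg]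
  have hmeas : Measurable fun q : E × E =>
      ENNReal.ofReal (dist q.1 q.2 ^ (-α)) * ‖u (q.1, 0) - u (q.2, 0)‖ₑ ^ p :=
    (by fun_prop : Measurable fun q : E × E => ENNReal.ofReal (dist q.1 q.2 ^ (-α))).mul
      (measurable_enorm_sub_rpow_of_continuous (by fun_prop) (by fun_prop) p)
  rw [lintegral_lintegral_eq_lintegral_lintegral_add volume (f := fun x y =>
    ENNReal.ofReal (dist x y ^ (-α)) * ‖u (x, 0) - u (y, 0)‖ₑ ^ p) hmeas]
  refine lintegral_congr fun h => ?_
  rw [sliceEnergy, ← lintegral_const_mul' _ _ ENNReal.ofReal_ne_top]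
  simp [dist_eq_norm, add_comm]

end Slices

section Nonlocal

variable {E F : Type*} [NormedAddCommGroup E] [NormedAddCommGroup F]

/-- The points of the stripe `E × (0, M]` at Euclidean distance less than `ϑ * ζ` from `(0, ζ)`.
The distance is spelled out because `E × ℝ` carries the sup norm. -/
def stripeBall (E : Type*) [NormedAddCommGroup E] (M ϑ ζ : ℝ) : Set (E × ℝ) :=
  {q | q.2 ∈ Set.Ioc 0 M ∧ ‖q.1‖ ^ 2 + (q.2 - ζ) ^ 2 < (ϑ * ζ) ^ 2}

/-- The `p`-th power of the localized nonlocal seminorm on the stripe `E × (0, M]`, with kernel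
`(ϑ * ζ) ^ (-γ)` on the pairs at distance less than `ϑ * ζ` from a point at height `ζ`. -/
noncomputable def nonlocalEnergy [MeasureSpace E] (u : E × ℝ → F) (p γ M ϑ : ℝ) : ℝ≥0∞ :=
  ∫⁻ x : E, ∫⁻ ζ in Set.Ioc 0 M, ∫⁻ y : E,
    ∫⁻ t in Set.Ioc 0 M ∩ {t | dist y x ^ 2 + (t - ζ) ^ 2 < (ϑ * ζ) ^ 2},
      ENNReal.ofReal (‖u (y, t) - u (x, ζ)‖ ^ p / (ϑ * ζ) ^ γ)

theorem nonlocalEnergy_congr [MeasureSpace E] {u v : E × ℝ → F} {M : ℝ}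
    (huv : Set.EqOn u v {q | q.2 ∈ Set.Ioc 0 M}) (p γ ϑ : ℝ) :
    nonlocalEnergy u p γ M ϑ = nonlocalEnergy v p γ M ϑ := by
  unfold nonlocalEnergy
  refine lintegral_congr fun x => setLIntegral_congr_fun measurableSet_Ioc fun ζ hζ =>
    lintegral_congr fun y => setLIntegral_congr_fun ?_ fun t ht => ?_
  · exact measurableSet_Ioc.inter (measurableSet_lt (by fun_prop) (by fun_prop))
  · simp only [huv (show (y, t).2 ∈ Set.Ioc 0 M from ht.1),
      huv (show (x, ζ).2 ∈ Set.Ioc 0 M from hζ)]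

variable [MeasureSpace E] [BorelSpace E]

theorem measurableSet_stripeBall_prod (M ϑ : ℝ) :
    MeasurableSet {z : ℝ × (E × ℝ) | z.2 ∈ stripeBall E M ϑ z.1} := by
  simp only [stripeBall, Set.mem_Ioc, Set.mem_ofPred_eq]
  measurability

theorem measurableSet_stripeBall (M ϑ ζ : ℝ) : MeasurableSet (stripeBall E M ϑ ζ) :=
  measurable_prodMk_left (measurableSet_stripeBall_prod M ϑ)

variable [(volume : Measure E).IsAddLeftInvariant]

theorem lintegral_lintegral_eq_setLIntegral_stripeBall {f : E × ℝ → ℝ≥0∞}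
    (hf : Measurable f) (M ϑ ζ : ℝ) (x : E) :
    ∫⁻ y : E, ∫⁻ t in Set.Ioc 0 M ∩ {t | dist y x ^ 2 + (t - ζ) ^ 2 < (ϑ * ζ) ^ 2}, f (y, t) =
      ∫⁻ q in stripeBall E M ϑ ζ, f (q + (x, 0)) := by
  have hball := measurableSet_stripeBall (E := E) M ϑ ζ
  have hsection (y : E) : MeasurableSet
      (Set.Ioc 0 M ∩ {t | dist (x + y) x ^ 2 + (t - ζ) ^ 2 < (ϑ * ζ) ^ 2}) :=
    measurableSet_Ioc.inter (measurableSet_lt (by fun_prop) (by fun_prop))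
  rw [← lintegral_indicator hball, Measure.volume_eq_prod, lintegral_prod _ (by fun_prop),
    ← lintegral_add_left_eq_self _ x]
  refine lintegral_congr fun y => ?_
  rw [← lintegral_indicator (hsection y)]
  refine lintegral_congr fun t => ?_
  simp [Set.indicator_apply, stripeBall, add_comm]

variable [SecondCountableTopology E] [SFinite (volume : Measure E)]

theorem nonlocalEnergy_eq_lintegral_sliceEnergy {u : E × ℝ → F} (hu : Continuous u) {p : ℝ}
    (hp : 0 ≤ p) {ϑ : ℝ} (hϑ : 0 ≤ ϑ) (γ M : ℝ) :
    nonlocalEnergy u p γ M ϑ = ∫⁻ ζ in Set.Ioc 0 M, ENNReal.ofReal ((ϑ * ζ) ^ (-γ)) *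
      ∫⁻ q in stripeBall E M ϑ ζ, sliceEnergy u p q (0, ζ) := by
  let H (z : (ℝ × E) × (E × ℝ)) : ℝ≥0∞ :=
    ‖u (z.2 + (z.1.2, 0)) - u ((0, z.1.1) + (z.1.2, 0))‖ₑ ^ p
  have hH : Measurable H :=
    measurable_enorm_sub_rpow_of_continuous (by fun_prop) (by fun_prop) p
  have hHball : Measurable fun z : ℝ × E => ∫⁻ q in stripeBall E M ϑ z.1, H (z, q) := by
    simp only [← lintegral_indicator (measurableSet_stripeBall M ϑ _)]
    exact (hH.indicator ((measurableSet_stripeBall_prod M ϑ).preimage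
      (measurable_fst.fst.prodMk measurable_snd))).lintegral_prod_right'
  calc nonlocalEnergy u p γ M ϑ
      = ∫⁻ x, ∫⁻ ζ in Set.Ioc 0 M, ENNReal.ofReal ((ϑ * ζ) ^ (-γ)) *
          ∫⁻ q in stripeBall E M ϑ ζ, H ((ζ, x), q) := by
        refine lintegral_congr fun x => setLIntegral_congr_fun measurableSet_Ioc fun ζ hζ => ?_
        have hϑζ : 0 ≤ ϑ * ζ := mul_nonneg hϑ hζ.1.le
        simp only [ofReal_norm_rpow_div_rpow _ hp hϑζ,
          lintegral_const_mul' _ _ ENNReal.ofReal_ne_top]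
        rw [lintegral_lintegral_eq_setLIntegral_stripeBall
          (measurable_enorm_sub_rpow_of_continuous hu continuous_const p)]
        simp [H]
    _ = ∫⁻ ζ in Set.Ioc 0 M, ENNReal.ofReal ((ϑ * ζ) ^ (-γ)) *
          ∫⁻ x, ∫⁻ q in stripeBall E M ϑ ζ, H ((ζ, x), q) := by
        have hmeas : Measurable fun z : ℝ × E => ENNReal.ofReal ((ϑ * z.1) ^ (-γ)) *
            ∫⁻ q in stripeBall E M ϑ z.1, H (z, q) := Measurable.mul (by fun_prop) hHball
        rw [← lintegral_lintegral_swap hmeas.aemeasurable]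
        simp only [lintegral_const_mul' _ _ ENNReal.ofReal_ne_top]
    _ = ∫⁻ ζ in Set.Ioc 0 M, ENNReal.ofReal ((ϑ * ζ) ^ (-γ)) *
          ∫⁻ q in stripeBall E M ϑ ζ, sliceEnergy u p q (0, ζ) := by
        refine lintegral_congr fun ζ => ?_
        have hHζ : Measurable fun z : E × (E × ℝ) => H ((ζ, z.1), z.2) :=
          hH.comp ((measurable_const.prodMk measurable_fst).prodMk measurable_snd)
        rw [lintegral_lintegral_swap hHζ.aemeasurable]
        rfl

end Nonlocal

section Cone

variable (E : Type*) [NormedAddCommGroup E]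

/-- The cone with vertex `0` whose section at height `t` is the ball of radius `2 * t`, cut at
height `M`. -/
def cone (M : ℝ) : Set (E × ℝ) :=
  {z | 0 < z.2 ∧ z.2 ≤ M ∧ ‖z.1‖ < 2 * z.2}

/-- The density `z ↦ z.2 ^ (-β)` on the truncated cone, extended by zero. -/
noncomputable def coneDensity (β M : ℝ) : E × ℝ → ℝ≥0∞ :=
  (cone E M).indicator fun z => ENNReal.ofReal (z.2 ^ (-β))

/-- The measure on the truncated cone with density `z ↦ z.2 ^ (-β)`. The slices around which `u`
is compared with its trace are distributed according to it. -/
noncomputable def coneMeasure [MeasureSpace E] (β M : ℝ) : Measure (E × ℝ) :=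
  volume.withDensity (coneDensity E β M)

/-- The cylinder with base a ball of radius `ρ`, between the heights `r` and `2 * r`. -/
def slabCylinder (ρ r : ℝ) : Set (E × ℝ) :=
  Metric.ball 0 ρ ×ˢ Set.Ioo r (2 * r)

variable {E}

theorem slabCylinder_subset_cone {ρ r M : ℝ} (hr : 0 < r) (hρ : ρ ≤ 2 * r) (hM : 2 * r ≤ M) :
    slabCylinder E ρ r ⊆ cone E M := fun z hz =>
  ⟨hr.trans hz.2.1, hz.2.2.le.trans hM,
    (mem_ball_zero_iff.1 hz.1).trans (by linarith [hz.2.1])⟩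

theorem coneDensity_of_mem (β : ℝ) {M : ℝ} {z : E × ℝ} (hz : z ∈ cone E M) :
    coneDensity E β M z = ENNReal.ofReal (z.2 ^ (-β)) :=
  Set.indicator_of_mem hz _

theorem coneDensity_of_notMem (β : ℝ) {M : ℝ} {z : E × ℝ} (hz : z ∉ cone E M) :
    coneDensity E β M z = 0 :=
  Set.indicator_of_notMem hz _

theorem coneDensity_le_mul_coneDensity_smul [NormedSpace ℝ E] (β M : ℝ) {μ : ℝ} (hμ0 : 0 < μ)
    (hμ1 : μ ≤ 1) (z : E × ℝ) :
    coneDensity E β M z ≤ ENNReal.ofReal (μ ^ β) * coneDensity E β M (μ • z) := by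
  by_cases hz : z ∈ cone E M
  · obtain ⟨hpos, hle, hlt⟩ := hz
    have hμz : μ • z ∈ cone E M := by
      refine ⟨mul_pos hμ0 hpos, (mul_le_of_le_one_left hpos.le hμ1).trans hle, ?_⟩
      simp only [Prod.smul_fst, Prod.smul_snd, norm_smul, Real.norm_of_nonneg hμ0.le, smul_eq_mul]
      linarith [mul_lt_mul_of_pos_left hlt hμ0]
    rw [coneDensity_of_mem β ⟨hpos, hle, hlt⟩, coneDensity_of_mem β hμz,
      ← ENNReal.ofReal_mul (by positivity), Prod.smul_snd, smul_eq_mul,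
      Real.mul_rpow hμ0.le hpos.le, ← mul_assoc, ← Real.rpow_add hμ0, add_neg_cancel,
      Real.rpow_zero, one_mul]
  · simp [coneDensity_of_notMem β hz]

theorem coneDensity_add_mul (β a M : ℝ) (z : E × ℝ) :
    coneDensity E (β + a) M z * ENNReal.ofReal (z.2 ^ a) = coneDensity E β M z := by
  by_cases hz : z ∈ cone E M
  · have hpos : 0 < z.2 := hz.1
    rw [coneDensity_of_mem _ hz, coneDensity_of_mem _ hz, ← ENNReal.ofReal_mul (by positivity),
      ← Real.rpow_add hpos]
    ring_nf
  · simp [coneDensity_of_notMem _ hz]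

variable [MeasurableSpace E] [BorelSpace E]

theorem measurableSet_cone (M : ℝ) : MeasurableSet (cone E M) := by
  unfold cone
  measurability

theorem measurableSet_slabCylinder (ρ r : ℝ) : MeasurableSet (slabCylinder E ρ r) :=
  Metric.isOpen_ball.measurableSet.prod measurableSet_Ioo

theorem measurable_coneDensity (β M : ℝ) : Measurable (coneDensity E β M) :=
  Measurable.indicator (by fun_prop) (measurableSet_cone M)

end Cone

section ConeMeasure

variable {E : Type*} [NormedAddCommGroup E] [MeasureSpace E] [BorelSpace E]

instance sFinite_coneMeasure [SFinite (volume : Measure E)] (β M : ℝ) :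
    SFinite (coneMeasure E β M) := by
  unfold coneMeasure
  infer_instance

theorem lintegral_coneMeasure {f : E × ℝ → ℝ≥0∞} (hf : Measurable f) (β M : ℝ) :
    ∫⁻ z, f z ∂coneMeasure E β M = ∫⁻ z, coneDensity E β M z * f z :=
  lintegral_withDensity_eq_lintegral_mul _ (measurable_coneDensity β M) hf

theorem ofReal_rpow_mul_setLIntegral_le_setLIntegral_coneMeasure {β M R : ℝ} (hβ : 0 ≤ β)
    {A : Set (E × ℝ)} (hA : MeasurableSet A) (hAcone : A ⊆ cone E M) (hAR : ∀ z ∈ A, z.2 ≤ R)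
    {f : E × ℝ → ℝ≥0∞} (hf : Measurable f) :
    ENNReal.ofReal (R ^ (-β)) * ∫⁻ z in A, f z ≤ ∫⁻ z in A, f z ∂coneMeasure E β M := by
  rw [← lintegral_const_mul' _ _ ENNReal.ofReal_ne_top, coneMeasure,
    setLIntegral_withDensity_eq_setLIntegral_mul _ (measurable_coneDensity β M) hf hA]
  refine setLIntegral_mono' hA fun z hz => ?_
  rw [Pi.mul_apply, coneDensity_of_mem β (hAcone hz)]
  gcongr ENNReal.ofReal ?_ * f z
  exact Real.rpow_le_rpow_of_nonpos (hAcone hz).1 (hAR z hz) (neg_nonpos.2 hβ)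

theorem lintegral_coneMeasure_eq_setLIntegral_Ioc [SFinite (volume : Measure E)]
    {f : E × ℝ → ℝ≥0∞} (hf : Measurable f) (β M : ℝ) :
    ∫⁻ z, f z ∂coneMeasure E β M = ∫⁻ ζ in Set.Ioc 0 M,
      ENNReal.ofReal (ζ ^ (-β)) * ∫⁻ w in Metric.ball (0 : E) (2 * ζ), f (w, ζ) := by
  rw [lintegral_coneMeasure hf, Measure.volume_eq_prod, lintegral_prod_symm'
    (fun z => coneDensity E β M z * f z) ((measurable_coneDensity β M).mul hf),
    ← lintegral_indicator measurableSet_Ioc]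
  refine lintegral_congr fun ζ => ?_
  by_cases hζ : ζ ∈ Set.Ioc 0 M
  · rw [Set.indicator_of_mem hζ, ← lintegral_indicator Metric.isOpen_ball.measurableSet,
      ← lintegral_const_mul' _ _ ENNReal.ofReal_ne_top]
    refine lintegral_congr fun w => ?_
    by_cases hw : w ∈ Metric.ball (0 : E) (2 * ζ)
    · rw [coneDensity_of_mem β ⟨hζ.1, hζ.2, mem_ball_zero_iff.1 hw⟩, Set.indicator_of_mem hw]
    · rw [coneDensity_of_notMem β fun h => hw (mem_ball_zero_iff.2 h.2.2),
        Set.indicator_of_notMem hw, zero_mul, mul_zero]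
  · rw [Set.indicator_of_notMem hζ]
    simp [coneDensity_of_notMem β fun h : (_, ζ) ∈ cone E M => hζ ⟨h.1, h.2.1⟩]

theorem map_smul_coneMeasure_le [NormedSpace ℝ E] [FiniteDimensional ℝ E]
    [(volume : Measure E).IsAddHaarMeasure] (β M : ℝ) {μ : ℝ} (hμ0 : 0 < μ) (hμ1 : μ ≤ 1) :
    (coneMeasure E β M).map (μ • ·) ≤
      ENNReal.ofReal (μ ^ (β - (Module.finrank ℝ E + 1))) • coneMeasure E β M := by
  have : (volume : Measure (E × ℝ)).IsAddHaarMeasure := Measure.prod.instIsAddHaarMeasure _ _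
  refine Measure.le_iff.2 fun A hA => ?_
  have hmeas : Measurable (μ • · : E × ℝ → E × ℝ) := measurable_const_smul μ
  rw [Measure.map_apply hmeas hA, Measure.smul_apply, smul_eq_mul, coneMeasure,
    withDensity_apply _ hA, withDensity_apply _ (hmeas hA), ← lintegral_indicator hA,
    ← lintegral_indicator (hmeas hA)]
  calc ∫⁻ z, ((μ • ·) ⁻¹' A).indicator (coneDensity E β M) z
      ≤ ∫⁻ z, ENNReal.ofReal (μ ^ β) * A.indicator (coneDensity E β M) (μ • z) := by
        refine lintegral_mono fun z => ?_
        by_cases hz : μ • z ∈ A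
        · simpa [hz] using coneDensity_le_mul_coneDensity_smul β M hμ0 hμ1 z
        · simp [hz]
    _ = ENNReal.ofReal (μ ^ (β - (Module.finrank ℝ E + 1))) *
          ∫⁻ z, A.indicator (coneDensity E β M) z := by
        rw [lintegral_const_mul' _ _ ENNReal.ofReal_ne_top,
          lintegral_comp_smul volume _ hμ0.ne', ← mul_assoc, ← ENNReal.ofReal_mul (by positivity),
          abs_of_pos (by positivity), Module.finrank_prod, Module.finrank_self,
          Real.rpow_sub hμ0, div_eq_mul_inv, ← Nat.cast_add_one, Real.rpow_natCast]

end ConeMeasure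

theorem two_rpow_sub_one_mul_add_self (p : ℝ) (x : ℝ≥0∞) : 2 ^ (p - 1) * (x + x) = 2 ^ p * x := by
  rw [← two_mul, ← mul_assoc, ← ENNReal.rpow_one 2, ← ENNReal.rpow_mul,
    ← ENNReal.rpow_add _ _ (by simp) (by simp)]
  norm_num

theorem two_rpow_mul_ofReal_two_mul_rpow_neg {r : ℝ} (hr : 0 < r) (a : ℝ) :
    2 ^ a * ENNReal.ofReal ((2 * r) ^ (-a)) = ENNReal.ofReal (r ^ (-a)) := by
  rw [← ENNReal.ofReal_ofNat 2, ENNReal.ofReal_rpow_of_pos two_pos,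
    ← ENNReal.ofReal_mul (by positivity), Real.mul_rpow two_pos.le hr.le, ← mul_assoc,
    ← Real.rpow_add two_pos, add_neg_cancel, Real.rpow_zero, one_mul]

theorem lintegral_setLIntegral_section {X Y : Type*} [MeasurableSpace X] [MeasurableSpace Y]
    (μ : Measure X) (ν : Measure Y) [SFinite μ] [SFinite ν] {s : Set (X × Y)}
    (hs : MeasurableSet s) {f : Y → ℝ≥0∞} (hf : Measurable f) :
    ∫⁻ x, ∫⁻ y in {y | (x, y) ∈ s}, f y ∂ν ∂μ = ∫⁻ y, f y * μ {x | (x, y) ∈ s} ∂ν := by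
  have hmeas : Measurable (Function.uncurry fun x y => s.indicator (fun q => f q.2) (x, y)) :=
    (hf.comp measurable_snd).indicator hs
  calc ∫⁻ x, ∫⁻ y in {y | (x, y) ∈ s}, f y ∂ν ∂μ
      = ∫⁻ x, ∫⁻ y, s.indicator (fun q => f q.2) (x, y) ∂ν ∂μ :=
        lintegral_congr fun x => (lintegral_indicator (measurable_prodMk_left hs) f).symm
    _ = ∫⁻ y, ∫⁻ x, s.indicator (fun q => f q.2) (x, y) ∂μ ∂ν :=
        lintegral_lintegral_swap hmeas.aemeasurable
    _ = ∫⁻ y, f y * μ {x | (x, y) ∈ s} ∂ν :=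
        lintegral_congr fun y => lintegral_indicator_const (measurable_prodMk_right hs) (f y)

section Cone

variable {E F : Type*} [NormedAddCommGroup E] [NormedSpace ℝ E] [FiniteDimensional ℝ E]
  [MeasureSpace E] [BorelSpace E] [(volume : Measure E).IsAddHaarMeasure] [NormedAddCommGroup F]

theorem volume_slabCylinder_self {r : ℝ} (hr : 0 < r) :
    volume (slabCylinder E r r) =
      ENNReal.ofReal (r ^ (Module.finrank ℝ E + 1)) * volume (Metric.ball (0 : E) 1) := by
  rw [slabCylinder, Measure.volume_eq_prod, Measure.prod_prod,
    Measure.addHaar_ball_of_pos volume _ hr, Real.volume_Ioo, two_mul, add_sub_cancel_right,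
    mul_right_comm, ← ENNReal.ofReal_mul (by positivity), pow_succ]

/-- The `p`-th power of the `L^p` distance between the trace of `u` and its slices, averaged over
the cone with weight `z ↦ z.2 ^ (-β)`. -/
noncomputable def coneEnergy (u : E × ℝ → F) (p β M : ℝ) : ℝ≥0∞ :=
  ∫⁻ z, sliceEnergy u p 0 z ∂coneMeasure E β M

theorem volume_mul_sliceEnergy_zero_le_setLIntegral {u : E × ℝ → F} (hu : Continuous u) {p : ℝ}
    (hp : 1 ≤ p) (h : E) {S T : Set (E × ℝ)} (hS : MeasurableSet S)
    (hT : MeasurableSet T) (hST : S ⊆ T)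
    (hSsub : ∀ z ∈ S, z - (h, 0) ∈ T) :
    volume S * sliceEnergy u p 0 (h, 0) ≤ 2 ^ p * ∫⁻ z in T, sliceEnergy u p 0 z := by
  have : (volume : Measure (E × ℝ)).IsAddHaarMeasure := Measure.prod.instIsAddHaarMeasure _ _
  have hshift (z : E × ℝ) : sliceEnergy u p z (h, 0) = sliceEnergy u p 0 (z - (h, 0)) := by
    rw [sliceEnergy_comm, ← sliceEnergy_add_horizontal u p 0 (z - (h, 0)) h]
    simp
  calc volume S * sliceEnergy u p 0 (h, 0)
      ≤ 2 ^ (p - 1) *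
          ((∫⁻ z in S, sliceEnergy u p 0 z) + ∫⁻ z in S, sliceEnergy u p z (h, 0)) :=
        volume_mul_sliceEnergy_le hu hp 0 (h, 0) S
    _ ≤ 2 ^ (p - 1) *
          ((∫⁻ z in T, sliceEnergy u p 0 z) + ∫⁻ z in T, sliceEnergy u p 0 z) := by
        gcongr 2 ^ (p - 1) * (?_ + ?_)
        · exact lintegral_mono_set hST
        · simp only [hshift, ← lintegral_indicator hT]
          rw [← lintegral_sub_right_eq_self (μ := volume)
            (T.indicator fun z => sliceEnergy u p 0 z) ((h, 0) : E × ℝ)]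
          refine (setLIntegral_mono' hS fun z hz => ?_).trans (setLIntegral_le_lintegral S _)
          rw [Set.indicator_of_mem (hSsub z hz)]
    _ = 2 ^ p * ∫⁻ z in T, sliceEnergy u p 0 z := two_rpow_sub_one_mul_add_self p _

theorem ofReal_norm_rpow_mul_volume_ball_mul_sliceEnergy_le {u : E × ℝ → F} (hu : Continuous u)
    {p a M : ℝ} (hp : 1 ≤ p) (ha : 0 ≤ a) {h : E} (hh : h ≠ 0) (hhM : 2 * ‖h‖ ≤ M) :
    ENNReal.ofReal (‖h‖ ^ (Module.finrank ℝ E + 1 - a)) *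
        (volume (Metric.ball (0 : E) 1) * sliceEnergy u p 0 (h, 0)) ≤
      2 ^ (p + a) * ∫⁻ z in {z | ‖h‖ < z.2}, sliceEnergy u p 0 z ∂coneMeasure E a M := by
  have hr : 0 < ‖h‖ := norm_pos_iff.2 hh
  set r := ‖h‖
  have hSsub : ∀ z ∈ slabCylinder E r r, z - (h, 0) ∈ slabCylinder E (2 * r) r := fun z hz => by
    obtain ⟨hfst, hsnd⟩ := hz
    rw [mem_ball_zero_iff] at hfst
    refine ⟨mem_ball_zero_iff.2 ?_, by simpa using hsnd⟩
    rw [Prod.fst_sub]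
    linarith [norm_sub_le z.1 h]
  have hST : slabCylinder E r r ⊆ slabCylinder E (2 * r) r :=
    Set.prod_mono_left (Metric.ball_subset_ball (by linarith))
  have hpow : r ^ (Module.finrank ℝ E + 1 - a) =
      r ^ (-a) * r ^ (Module.finrank ℝ E + 1) := by
    rw [← Real.rpow_natCast, ← Real.rpow_add hr]
    push_cast
    ring_nf
  calc ENNReal.ofReal (r ^ (Module.finrank ℝ E + 1 - a)) *
        (volume (Metric.ball (0 : E) 1) * sliceEnergy u p 0 (h, 0))
      = ENNReal.ofReal (r ^ (-a)) * (volume (slabCylinder E r r) * sliceEnergy u p 0 (h, 0)) := by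
        rw [volume_slabCylinder_self hr, hpow, ENNReal.ofReal_mul (by positivity)]
        ring
    _ ≤ ENNReal.ofReal (r ^ (-a)) *
          (2 ^ p * ∫⁻ z in slabCylinder E (2 * r) r, sliceEnergy u p 0 z) := by
        gcongr ENNReal.ofReal (r ^ (-a)) * ?_
        exact volume_mul_sliceEnergy_zero_le_setLIntegral hu hp h (measurableSet_slabCylinder r r)
          (measurableSet_slabCylinder _ r) hST hSsub
    _ = 2 ^ (p + a) * (ENNReal.ofReal ((2 * r) ^ (-a)) *
          ∫⁻ z in slabCylinder E (2 * r) r, sliceEnergy u p 0 z) := by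
        rw [ENNReal.rpow_add _ _ two_ne_zero ENNReal.ofNat_ne_top,
          ← two_rpow_mul_ofReal_two_mul_rpow_neg hr]
        ring
    _ ≤ 2 ^ (p + a) * ∫⁻ z in slabCylinder E (2 * r) r, sliceEnergy u p 0 z ∂coneMeasure E a M := by
        gcongr
        exact ofReal_rpow_mul_setLIntegral_le_setLIntegral_coneMeasure ha
          (measurableSet_slabCylinder _ r) (slabCylinder_subset_cone hr le_rfl hhM)
          (fun z hz => hz.2.2.le) (measurable_sliceEnergy hu p measurable_const measurable_id')
    _ ≤ 2 ^ (p + a) * ∫⁻ z in {z | r < z.2}, sliceEnergy u p 0 z ∂coneMeasure E a M := by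
        gcongr
        exact fun z hz => hz.2.1

theorem lintegral_setLIntegral_norm_lt_coneMeasure {f : E × ℝ → ℝ≥0∞} (hf : Measurable f)
    (β M : ℝ) :
    ∫⁻ h : E, ∫⁻ z in {z | ‖h‖ < z.2}, f z ∂coneMeasure E (β + Module.finrank ℝ E) M =
      volume (Metric.ball (0 : E) 1) * ∫⁻ z, f z ∂coneMeasure E β M := by
  have hset : MeasurableSet {q : E × (E × ℝ) | ‖q.1‖ < q.2.2} :=
    measurableSet_lt (by fun_prop) (by fun_prop)
  have hvolume (z : E × ℝ) : coneDensity E (β + Module.finrank ℝ E) M z *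
      volume {h : E | ‖h‖ < z.2} = coneDensity E β M z * volume (Metric.ball (0 : E) 1) := by
    by_cases hz : z ∈ cone E M
    · have hball : {h : E | ‖h‖ < z.2} = Metric.ball 0 z.2 := by ext; simp
      rw [hball, Measure.addHaar_ball_of_pos volume _ hz.1, ← Real.rpow_natCast, ← mul_assoc,
        coneDensity_add_mul]
    · simp [coneDensity_of_notMem _ hz]
  calc ∫⁻ h : E, ∫⁻ z in {z | ‖h‖ < z.2}, f z ∂coneMeasure E (β + Module.finrank ℝ E) M
      = ∫⁻ z, f z * volume {h : E | ‖h‖ < z.2} ∂coneMeasure E (β + Module.finrank ℝ E) M :=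
        lintegral_setLIntegral_section volume _ hset hf
    _ = volume (Metric.ball (0 : E) 1) * ∫⁻ z, f z ∂coneMeasure E β M := by
        have hmeas : Measurable fun z : E × ℝ => f z * volume {h : E | ‖h‖ < z.2} :=
          hf.mul (measurable_measure_prodMk_right hset)
        rw [lintegral_coneMeasure hmeas,
          lintegral_coneMeasure hf, ← lintegral_const_mul' _ _ measure_ball_lt_top.ne]
        refine lintegral_congr fun z => ?_
        rw [mul_left_comm, hvolume]
        ring

theorem setLIntegral_ball_sliceEnergy_le_coneEnergy {u : E × ℝ → F} (hu : Continuous u) {p β : ℝ}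
    (hp : 1 ≤ p) (hβ : 0 ≤ β) (r : ℝ) :
    ∫⁻ h in Metric.ball (0 : E) r, ENNReal.ofReal (‖h‖ ^ (1 - β)) *
        sliceEnergy u p 0 (h, 0) ≤
      2 ^ (p + (β + Module.finrank ℝ E)) * coneEnergy u p β (2 * r) := by
  have hω0 : volume (Metric.ball (0 : E) 1) ≠ 0 := (Metric.measure_ball_pos _ _ one_pos).ne'
  have hω : volume (Metric.ball (0 : E) 1) ≠ ∞ := measure_ball_lt_top.ne
  rw [← ENNReal.mul_le_mul_iff_right hω0 hω, ← lintegral_const_mul' _ _ hω]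
  calc ∫⁻ h in Metric.ball (0 : E) r, volume (Metric.ball (0 : E) 1) *
          (ENNReal.ofReal (‖h‖ ^ (1 - β)) * sliceEnergy u p 0 (h, 0))
      ≤ ∫⁻ h in Metric.ball (0 : E) r, 2 ^ (p + (β + Module.finrank ℝ E)) *
          ∫⁻ z in {z | ‖h‖ < z.2}, sliceEnergy u p 0 z
            ∂coneMeasure E (β + Module.finrank ℝ E) (2 * r) := by
        refine setLIntegral_mono' Metric.isOpen_ball.measurableSet fun h hh => ?_
        rcases eq_or_ne h 0 with rfl | hne
        · rw [← Prod.zero_eq_mk, sliceEnergy_self u (by linarith)]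
          simp
        · rw [mem_ball_zero_iff] at hh
          have hnear := ofReal_norm_rpow_mul_volume_ball_mul_sliceEnergy_le hu hp
            (by positivity : 0 ≤ β + Module.finrank ℝ E) hne (by linarith : 2 * ‖h‖ ≤ 2 * r)
          rw [show (Module.finrank ℝ E + 1 - (β + Module.finrank ℝ E) : ℝ) = 1 - β by ring] at hnear
          rwa [mul_left_comm]
    _ ≤ 2 ^ (p + (β + Module.finrank ℝ E)) * ∫⁻ h : E, ∫⁻ z in {z | ‖h‖ < z.2},
          sliceEnergy u p 0 z ∂coneMeasure E (β + Module.finrank ℝ E) (2 * r) := by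
        rw [lintegral_const_mul' _ _ (by finiteness)]
        gcongr
        exact Measure.restrict_le_self
    _ = volume (Metric.ball (0 : E) 1) *
          (2 ^ (p + (β + Module.finrank ℝ E)) * coneEnergy u p β (2 * r)) := by
        rw [lintegral_setLIntegral_norm_lt_coneMeasure
          (measurable_sliceEnergy hu p measurable_const measurable_id'), coneEnergy]
        ring

end Cone

section Tail

variable {E F : Type*} [NormedAddCommGroup E] [NormedSpace ℝ E] [FiniteDimensional ℝ E]
  [MeasureSpace E] [BorelSpace E] [(volume : Measure E).IsAddHaarMeasure] [NormedAddCommGroup F]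

theorem setLIntegral_compl_ball_one_norm_rpow_neg_lt_top {α : ℝ}
    (hα : (Module.finrank ℝ E : ℝ) < α) :
    ∫⁻ h in (Metric.ball (0 : E) 1)ᶜ, ENNReal.ofReal (‖h‖ ^ (-α)) < ∞ := by
  have hα0 : 0 ≤ α := (Nat.cast_nonneg _).trans hα.le
  have hpointwise : ∀ h ∈ (Metric.ball (0 : E) 1)ᶜ, ENNReal.ofReal (‖h‖ ^ (-α)) ≤
      ENNReal.ofReal (2 ^ α) * ENNReal.ofReal ((1 + ‖h‖) ^ (-α)) := fun h hh => by
    have h1 : 1 ≤ ‖h‖ := by simpa using hh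
    rw [← ENNReal.ofReal_mul (by positivity)]
    gcongr
    calc ‖h‖ ^ (-α) = 2 ^ α * (2 * ‖h‖) ^ (-α) := by
          rw [Real.mul_rpow two_pos.le (norm_nonneg h), ← mul_assoc, ← Real.rpow_add two_pos,
            add_neg_cancel, Real.rpow_zero, one_mul]
      _ ≤ 2 ^ α * (1 + ‖h‖) ^ (-α) := by
          gcongr 2 ^ α * ?_
          exact Real.rpow_le_rpow_of_nonpos (by positivity) (by linarith) (neg_nonpos.2 hα0)
  calc ∫⁻ h in (Metric.ball (0 : E) 1)ᶜ, ENNReal.ofReal (‖h‖ ^ (-α))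
      ≤ ∫⁻ h in (Metric.ball (0 : E) 1)ᶜ,
          ENNReal.ofReal (2 ^ α) * ENNReal.ofReal ((1 + ‖h‖) ^ (-α)) :=
        setLIntegral_mono' Metric.isOpen_ball.measurableSet.compl hpointwise
    _ ≤ ENNReal.ofReal (2 ^ α) * ∫⁻ h : E, ENNReal.ofReal ((1 + ‖h‖) ^ (-α)) := by
        rw [← lintegral_const_mul' _ _ ENNReal.ofReal_ne_top]
        exact setLIntegral_le_lintegral _ _
    _ < ∞ := ENNReal.mul_lt_top ENNReal.ofReal_lt_top (finite_integral_one_add_norm hα)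

theorem setLIntegral_compl_ball_norm_rpow_neg {r : ℝ} (hr : 0 < r) (α : ℝ) :
    ∫⁻ h in (Metric.ball (0 : E) r)ᶜ, ENNReal.ofReal (‖h‖ ^ (-α)) =
      ENNReal.ofReal (r ^ (Module.finrank ℝ E - α)) *
        ∫⁻ h in (Metric.ball (0 : E) 1)ᶜ, ENNReal.ofReal (‖h‖ ^ (-α)) := by
  have hball (s : ℝ) : MeasurableSet (Metric.ball (0 : E) s)ᶜ :=
    Metric.isOpen_ball.measurableSet.compl
  have hscale (h : E) :
      (Metric.ball (0 : E) r)ᶜ.indicator (fun h => ENNReal.ofReal (‖h‖ ^ (-α))) h =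
        ENNReal.ofReal (r ^ (-α)) *
          (Metric.ball (0 : E) 1)ᶜ.indicator (fun h => ENNReal.ofReal (‖h‖ ^ (-α))) (r⁻¹ • h) := by
    have hnorm : ‖r⁻¹ • h‖ = r⁻¹ * ‖h‖ := by rw [norm_smul, Real.norm_of_nonneg (by positivity)]
    have hmem : r⁻¹ • h ∈ (Metric.ball (0 : E) 1)ᶜ ↔ h ∈ (Metric.ball (0 : E) r)ᶜ := by
      simp [hnorm, le_inv_mul_iff₀ hr]
    by_cases hh : h ∈ (Metric.ball (0 : E) r)ᶜ
    · rw [Set.indicator_of_mem hh, Set.indicator_of_mem (hmem.2 hh), hnorm,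
        ← ENNReal.ofReal_mul (by positivity), ← Real.mul_rpow hr.le (by positivity),
        mul_inv_cancel_left₀ hr.ne']
    · rw [Set.indicator_of_notMem hh, Set.indicator_of_notMem (mt hmem.1 hh), mul_zero]
  rw [← lintegral_indicator (hball r), ← lintegral_indicator (hball 1), lintegral_congr hscale,
    lintegral_const_mul' _ _ ENNReal.ofReal_ne_top,
    lintegral_comp_smul volume _ (inv_ne_zero hr.ne'), ← mul_assoc,
    ← ENNReal.ofReal_mul (by positivity), abs_of_pos (by positivity), inv_pow, inv_inv,
    mul_comm (r ^ (-α)), ← Real.rpow_natCast, ← Real.rpow_add hr, sub_eq_add_neg]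

theorem setLIntegral_compl_ball_sliceEnergy_le {u : E × ℝ → F} (hu : Continuous u) {p : ℝ}
    (hp : 1 ≤ p) {r : ℝ} (hr : 0 < r) (α : ℝ) :
    ∫⁻ h in (Metric.ball (0 : E) r)ᶜ, ENNReal.ofReal (‖h‖ ^ (-α)) * sliceEnergy u p 0 (h, 0) ≤
      2 ^ p * (∫⁻ h in (Metric.ball (0 : E) 1)ᶜ, ENNReal.ofReal (‖h‖ ^ (-α))) *
        (ENNReal.ofReal (r ^ (Module.finrank ℝ E - α)) * sliceMass u p 0) :=
  calc ∫⁻ h in (Metric.ball (0 : E) r)ᶜ, ENNReal.ofReal (‖h‖ ^ (-α)) * sliceEnergy u p 0 (h, 0)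
      ≤ ∫⁻ h in (Metric.ball (0 : E) r)ᶜ,
          ENNReal.ofReal (‖h‖ ^ (-α)) * (2 ^ p * sliceMass u p 0) := by
        gcongr with h
        exact (sliceEnergy_le_sliceMass hu hp 0 (h, 0)).trans_eq
          (two_rpow_sub_one_mul_add_self p _)
    _ = _ := by
        rw [lintegral_mul_const _ (by fun_prop), setLIntegral_compl_ball_norm_rpow_neg hr]
        ring

theorem volume_slabCylinder_mul_sliceMass_zero_le {u : E × ℝ → F} (hu : Continuous u) {p : ℝ}
    (hp : 1 ≤ p) (r : ℝ) :
    volume (slabCylinder E r r) * sliceMass u p 0 ≤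
      2 ^ (p - 1) * ((∫⁻ z in slabCylinder E r r, sliceEnergy u p 0 z) +
        volume (Metric.ball (0 : E) r) * ∫⁻ t in Set.Ioo r (2 * r), sliceMass u p t) :=
  calc volume (slabCylinder E r r) * sliceMass u p 0
      = ∫⁻ _ in slabCylinder E r r, sliceMass u p 0 := by rw [setLIntegral_const, mul_comm]
    _ ≤ ∫⁻ z in slabCylinder E r r, 2 ^ (p - 1) * (sliceEnergy u p 0 z + sliceMass u p z.2) :=
        lintegral_mono fun z => sliceMass_le hu hp 0 z
    _ = 2 ^ (p - 1) * ((∫⁻ z in slabCylinder E r r, sliceEnergy u p 0 z) +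
          ∫⁻ z in slabCylinder E r r, sliceMass u p z.2) := by
        rw [lintegral_const_mul' _ _ (by finiteness),
          lintegral_add_left (measurable_sliceEnergy hu p measurable_const measurable_id')]
    _ = 2 ^ (p - 1) * ((∫⁻ z in slabCylinder E r r, sliceEnergy u p 0 z) +
          volume (Metric.ball (0 : E) r) * ∫⁻ t in Set.Ioo r (2 * r), sliceMass u p t) := by
        have hmeas : Measurable fun z : E × ℝ => sliceMass u p z.2 :=
          (measurable_sliceMass hu p).comp measurable_snd
        congr 2
        rw [slabCylinder, Measure.volume_eq_prod, setLIntegral_prod _ hmeas.aemeasurable]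
        simp only [setLIntegral_const, mul_comm]

theorem ofReal_rpow_mul_volume_ball_mul_sliceMass_zero_le {u : E × ℝ → F} (hu : Continuous u)
    {p β r : ℝ} (hp : 1 ≤ p) (hβ : 0 ≤ β) (hr : 0 < r) :
    ENNReal.ofReal (r ^ (Module.finrank ℝ E + 1 - β)) *
        (volume (Metric.ball (0 : E) 1) * sliceMass u p 0) ≤
      2 ^ (p - 1) * (2 ^ β * coneEnergy u p β (2 * r) + volume (Metric.ball (0 : E) 1) *
        (ENNReal.ofReal (r ^ (Module.finrank ℝ E - β)) *
          ∫⁻ t in Set.Ioc 0 (2 * r), sliceMass u p t)) := by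
  have hpow (k : ℕ) : ENNReal.ofReal (r ^ (k - β)) =
      ENNReal.ofReal (r ^ (-β)) * ENNReal.ofReal (r ^ k) := by
    rw [← ENNReal.ofReal_mul (by positivity), ← Real.rpow_natCast, ← Real.rpow_add hr,
      neg_add_eq_sub]
  have hcone : ENNReal.ofReal (r ^ (-β)) * ∫⁻ z in slabCylinder E r r, sliceEnergy u p 0 z ≤
      2 ^ β * coneEnergy u p β (2 * r) := by
    rw [← two_rpow_mul_ofReal_two_mul_rpow_neg hr, mul_assoc]
    gcongr
    exact (ofReal_rpow_mul_setLIntegral_le_setLIntegral_coneMeasure hβ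
      (measurableSet_slabCylinder r r) (slabCylinder_subset_cone hr (by linarith) le_rfl)
      (fun z hz => hz.2.2.le) (measurable_sliceEnergy hu p measurable_const measurable_id')).trans
      (setLIntegral_le_lintegral _ _)
  calc ENNReal.ofReal (r ^ (Module.finrank ℝ E + 1 - β)) *
        (volume (Metric.ball (0 : E) 1) * sliceMass u p 0)
      = ENNReal.ofReal (r ^ (-β)) * (volume (slabCylinder E r r) * sliceMass u p 0) := by
        rw [volume_slabCylinder_self hr, ← Nat.cast_add_one, hpow]
        ring
    _ ≤ ENNReal.ofReal (r ^ (-β)) * (2 ^ (p - 1) *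
          ((∫⁻ z in slabCylinder E r r, sliceEnergy u p 0 z) +
            volume (Metric.ball (0 : E) r) * ∫⁻ t in Set.Ioo r (2 * r), sliceMass u p t)) := by
        gcongr ENNReal.ofReal _ * ?_
        exact volume_slabCylinder_mul_sliceMass_zero_le hu hp r
    _ = 2 ^ (p - 1) *
          (ENNReal.ofReal (r ^ (-β)) * (∫⁻ z in slabCylinder E r r, sliceEnergy u p 0 z) +
            volume (Metric.ball (0 : E) 1) * (ENNReal.ofReal (r ^ (Module.finrank ℝ E - β)) *
              ∫⁻ t in Set.Ioo r (2 * r), sliceMass u p t)) := by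
        rw [hpow, Measure.addHaar_ball_of_pos volume _ hr]
        ring
    _ ≤ _ := by
        gcongr
        exact fun t ht => ⟨hr.trans ht.1, ht.2.le⟩

theorem ofReal_rpow_mul_sliceMass_zero_le {u : E × ℝ → F} (hu : Continuous u)
    {p β r : ℝ} (hp : 1 ≤ p) (hβ : 0 ≤ β) (hr : 0 < r) :
    ENNReal.ofReal (r ^ (Module.finrank ℝ E + 1 - β)) * sliceMass u p 0 ≤
      2 ^ (p - 1) *
          (2 ^ β * (volume (Metric.ball (0 : E) 1))⁻¹ + 2 ^ (β - Module.finrank ℝ E)) *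
        (ENNReal.ofReal ((2 * r) ^ (Module.finrank ℝ E - β)) *
          (∫⁻ t in Set.Ioc 0 (2 * r), sliceMass u p t) + coneEnergy u p β (2 * r)) := by
  have hω0 : volume (Metric.ball (0 : E) 1) ≠ 0 := (Metric.measure_ball_pos _ _ one_pos).ne'
  have hω : volume (Metric.ball (0 : E) 1) ≠ ∞ := measure_ball_lt_top.ne
  have hdouble := two_rpow_mul_ofReal_two_mul_rpow_neg hr (β - Module.finrank ℝ E)
  rw [neg_sub] at hdouble
  have hmass := ofReal_rpow_mul_volume_ball_mul_sliceMass_zero_le hu hp hβ hr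
  rw [mul_left_comm, ← hdouble] at hmass
  rw [← ENNReal.mul_le_mul_iff_right hω0 hω]
  set ω := volume (Metric.ball (0 : E) 1)
  set L := ENNReal.ofReal ((2 * r) ^ (Module.finrank ℝ E - β)) *
    ∫⁻ t in Set.Ioc 0 (2 * r), sliceMass u p t with hL
  set Q := coneEnergy u p β (2 * r)
  rw [mul_assoc (2 ^ (β - Module.finrank ℝ E) : ℝ≥0∞), ← hL] at hmass
  calc _ ≤ 2 ^ (p - 1) * (2 ^ β * Q + ω * (2 ^ (β - Module.finrank ℝ E) * L)) := hmass
    _ ≤ 2 ^ (p - 1) * (2 ^ β * (L + Q) + ω * (2 ^ (β - Module.finrank ℝ E) * (L + Q))) := by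
        gcongr
        · exact le_add_self
        · exact le_self_add
    _ = 2 ^ (p - 1) * (ω * ω⁻¹ * 2 ^ β * (L + Q) +
          ω * (2 ^ (β - Module.finrank ℝ E) * (L + Q))) := by
        rw [ENNReal.mul_inv_cancel hω0 hω, one_mul]
    _ = _ := by ring

end Tail

theorem inv_one_sub_one_sub_rpow_rpow_le {b p a τ : ℝ} (hb : 0 < b) (hp : 0 ≤ p) (ha : 0 < a)
    (haτ : a ≤ τ) (hτ : τ ≤ 1) :
    (1 - ENNReal.ofReal ((1 - τ) ^ b))⁻¹ ^ p ≤ ENNReal.ofReal ((min b 1 * a) ^ (-p)) := by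
  have hmin : 0 < min b 1 := lt_min hb one_pos
  have hbernoulli : (1 - τ) ^ b ≤ 1 - min b 1 * τ := by
    rcases (sub_nonneg.2 hτ).eq_or_lt with h0 | h0
    · rw [← h0, Real.zero_rpow hb.ne']
      nlinarith [min_le_right b 1]
    calc (1 - τ) ^ b ≤ (1 - τ) ^ min b 1 :=
          Real.rpow_le_rpow_of_exponent_ge h0 (by linarith) (min_le_left b 1)
      _ ≤ 1 - min b 1 * τ := by
          simpa [sub_eq_add_neg] using rpow_one_add_le_one_add_mul_self (s := -τ) (by linarith)
            hmin.le (min_le_right b 1)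
  have hlower : ENNReal.ofReal (min b 1 * a) ≤ 1 - ENNReal.ofReal ((1 - τ) ^ b) := by
    rw [← ENNReal.ofReal_one, ← ENNReal.ofReal_sub _ (Real.rpow_nonneg (by linarith) b)]
    exact ENNReal.ofReal_le_ofReal (by nlinarith)
  rw [← ENNReal.ofReal_rpow_of_pos (mul_pos hmin ha), ENNReal.rpow_neg, ENNReal.inv_rpow]
  gcongr

theorem tendsto_comp_iterate_prodMap_smul {V W X : Type*} [NormedAddCommGroup V]
    [NormedSpace ℝ V] [TopologicalSpace W] [TopologicalSpace X] {f : V × W → X}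
    (hf : Continuous f) {μ : ℝ} (hμ0 : 0 ≤ μ) (hμ1 : μ < 1) (q : V × W) :
    Filter.Tendsto (fun k => f ((Prod.map (μ • ·) id)^[k] q)) Filter.atTop
      (nhds (f (0, q.2))) := by
  have hpow : Filter.Tendsto (fun k : ℕ => μ ^ k • q.1) Filter.atTop (nhds 0) := by
    simpa using (tendsto_pow_atTop_nhds_zero_of_lt_one hμ0 hμ1).smul_const q.1
  simpa [Prod.map_iterate, smul_iterate, Function.comp_def, Prod.map] using
    (hf.tendsto _).comp (hpow.prodMk_nhds (tendsto_const_nhds (x := q.2)))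

section Dilation

variable {E F : Type*} [NormedAddCommGroup E] [NormedSpace ℝ E] [FiniteDimensional ℝ E]
  [MeasureSpace E] [BorelSpace E] [(volume : Measure E).IsAddHaarMeasure] [NormedAddCommGroup F]

theorem eLpNorm_prod_rpow_eq_lintegral_sliceEnergy {u : E × ℝ → F} (hu : Continuous u) {p : ℝ}
    (hp : 0 < p) {κ : Measure (E × ℝ)} {f g : E × ℝ → E × ℝ} (hf : Continuous f)
    (hg : Continuous g) :
    eLpNorm (fun q : (E × ℝ) × E => u (f q.1 + (q.2, 0)) - u (g q.1 + (q.2, 0)))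
      (ENNReal.ofReal p) (κ.prod volume) ^ p = ∫⁻ z, sliceEnergy u p (f z) (g z) ∂κ := by
  have hmeas : Measurable fun q : (E × ℝ) × E =>
      ‖u (f q.1 + (q.2, 0)) - u (g q.1 + (q.2, 0))‖ₑ ^ p :=
    measurable_enorm_sub_rpow_of_continuous (by fun_prop) (by fun_prop) p
  rw [eLpNorm_eq_lintegral_rpow_enorm_toReal (ENNReal.ofReal_pos.2 hp).ne' ENNReal.ofReal_ne_top,
    ENNReal.toReal_ofReal hp.le, ← ENNReal.rpow_mul, one_div_mul_cancel hp.ne', ENNReal.rpow_one,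
    lintegral_prod _ hmeas.aemeasurable]
  rfl

theorem coneEnergy_le_lintegral_sliceEnergy_smul {u : E × ℝ → F} (hu : Continuous u) {p μ : ℝ}
    (hp : 1 ≤ p) (hμ0 : 0 < μ) (hμ1 : μ < 1) (β M : ℝ) :
    coneEnergy u p β M ≤ (1 - ENNReal.ofReal (μ ^ ((β - (Module.finrank ℝ E + 1)) / p)))⁻¹ ^ p *
      ∫⁻ z, sliceEnergy u p (μ • z) z ∂coneMeasure E β M := by
  have hp0 : 0 < p := one_pos.trans_le hp
  let v (q : (E × ℝ) × E) : F := u (q.1 + (q.2, 0))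
  have hv : Continuous v := by fun_prop
  have hsmul : Measurable (μ • · : E × ℝ → E × ℝ) := measurable_const_smul μ
  have hnorm := eLpNorm_sub_le_of_tendsto_comp_iterate (p := ENNReal.ofReal p)
    (hsmul.prodMap measurable_id)
    (map_prodMap_id_le_smul hsmul (map_smul_coneMeasure_le β M hμ0 hμ1.le) volume)
    (ENNReal.one_le_ofReal.2 hp) ENNReal.ofReal_ne_top hv.stronglyMeasurable
    (tendsto_comp_iterate_prodMap_smul hv hμ0.le hμ1)
  have hratio : ENNReal.ofReal (μ ^ (β - (Module.finrank ℝ E + 1))) ^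
      (1 / ENNReal.ofReal p).toReal =
        ENNReal.ofReal (μ ^ ((β - (Module.finrank ℝ E + 1)) / p)) := by
    rw [ENNReal.toReal_div, ENNReal.toReal_one, ENNReal.toReal_ofReal hp0.le,
      ENNReal.ofReal_rpow_of_pos (by positivity), ← Real.rpow_mul hμ0.le, mul_one_div]
  rw [hratio] at hnorm
  have htrace : eLpNorm ((fun q => u (0 + (q.2, 0))) - v) (ENNReal.ofReal p)
      ((coneMeasure E β M).prod volume) ^ p = coneEnergy u p β M :=
    eLpNorm_prod_rpow_eq_lintegral_sliceEnergy hu hp0 (f := fun _ => 0) (g := fun z => z)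
      continuous_const continuous_id'
  have hdilation : eLpNorm (v ∘ Prod.map (μ • ·) id - v) (ENNReal.ofReal p)
      ((coneMeasure E β M).prod volume) ^ p =
        ∫⁻ z, sliceEnergy u p (μ • z) z ∂coneMeasure E β M :=
    eLpNorm_prod_rpow_eq_lintegral_sliceEnergy hu hp0 (f := fun z => μ • z) (g := fun z => z)
      (continuous_const_smul μ) continuous_id'
  rw [← htrace, ← hdilation, ← ENNReal.mul_rpow_of_nonneg _ _ hp0.le]
  gcongr

end Dilation

section Averaging

variable {E F : Type*} [NormedAddCommGroup E] [NormedSpace ℝ E] [NormedAddCommGroup F]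

theorem neg_smul_mem_stripeBall {M ϑ τ ζ : ℝ} (hτ0 : 0 < τ) (hτ1 : τ < 1) (hτϑ : τ ≤ 2 / 5 * ϑ)
    (hζ : ζ ∈ Set.Ioc 0 M) {w : E} (hw : w ∈ Metric.ball (0 : E) (2 * ζ)) :
    (-τ • w, ζ - τ * ζ) ∈ stripeBall E M ϑ ζ := by
  have hτζ : 0 < τ * ζ := mul_pos hτ0 hζ.1
  rw [mem_ball_zero_iff] at hw
  refine ⟨⟨by nlinarith [hζ.1], by linarith [hζ.2]⟩, ?_⟩
  calc ‖-τ • w‖ ^ 2 + (ζ - τ * ζ - ζ) ^ 2 = (τ * ‖w‖) ^ 2 + (τ * ζ) ^ 2 := by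
        rw [norm_smul, norm_neg, Real.norm_of_nonneg hτ0.le]
        ring
    _ < (τ * (2 * ζ)) ^ 2 + (τ * ζ) ^ 2 := by gcongr
    _ = 5 * τ ^ 2 * ζ ^ 2 := by ring
    _ ≤ 5 * (2 / 5 * ϑ) ^ 2 * ζ ^ 2 := by gcongr
    _ ≤ (ϑ * ζ) ^ 2 := by nlinarith [sq_nonneg (ϑ * ζ)]

variable [MeasureSpace E] [BorelSpace E] [(volume : Measure E).IsAddHaarMeasure]

theorem sliceEnergy_one_sub_smul (u : E × ℝ → F) (p τ : ℝ) (w : E) (ζ : ℝ) :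
    sliceEnergy u p ((1 - τ) • (w, ζ)) (w, ζ) = sliceEnergy u p (-τ • w, ζ - τ * ζ) (0, ζ) := by
  rw [← sliceEnergy_add_horizontal u p (-τ • w, ζ - τ * ζ) (0, ζ) w]
  congr 1
  · ext
    · simp only [Prod.smul_fst, Prod.fst_add]
      module
    · simp only [Prod.smul_snd, Prod.snd_add, smul_eq_mul]
      ring
  · simp

variable [FiniteDimensional ℝ E]

theorem setLIntegral_Ioi_lintegral_comp_neg_smul_le {a ζ : ℝ} (ha : 0 < a) (hζ : 0 < ζ)
    {f : E × ℝ → ℝ≥0∞} (hf : Measurable f) :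
    ∫⁻ τ in Set.Ioi a, ∫⁻ w : E, f (-τ • w, ζ - τ * ζ) ≤
      ENNReal.ofReal ((a ^ Module.finrank ℝ E * ζ)⁻¹) * ∫⁻ q, f q := by
  have hhorizontal : ∀ τ ∈ Set.Ioi a, ∫⁻ w : E, f (-τ • w, ζ - τ * ζ) ≤
      ENNReal.ofReal (a ^ Module.finrank ℝ E)⁻¹ * ∫⁻ w : E, f (w, ζ - τ * ζ) := fun τ hτ => by
    have hτ0 : 0 < τ := ha.trans hτ
    rw [lintegral_comp_smul volume (fun w => f (w, ζ - τ * ζ)) (neg_ne_zero.2 hτ0.ne'), abs_inv,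
      abs_pow, abs_neg, abs_of_pos hτ0]
    gcongr
    exact hτ.le
  calc ∫⁻ τ in Set.Ioi a, ∫⁻ w : E, f (-τ • w, ζ - τ * ζ)
      ≤ ∫⁻ τ in Set.Ioi a,
          ENNReal.ofReal (a ^ Module.finrank ℝ E)⁻¹ * ∫⁻ w : E, f (w, ζ - τ * ζ) :=
        setLIntegral_mono' measurableSet_Ioi hhorizontal
    _ ≤ ENNReal.ofReal (a ^ Module.finrank ℝ E)⁻¹ * ∫⁻ τ : ℝ, ∫⁻ w : E, f (w, ζ - τ * ζ) := by
        rw [← lintegral_const_mul' _ _ ENNReal.ofReal_ne_top]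
        exact setLIntegral_le_lintegral _ _
    _ = ENNReal.ofReal ((a ^ Module.finrank ℝ E * ζ)⁻¹) * ∫⁻ q, f q := by
        rw [lintegral_comp_sub_mul_self (fun t => ∫⁻ w : E, f (w, t)) hζ, ← mul_assoc,
          ← ENNReal.ofReal_mul (by positivity), ← mul_inv, Measure.volume_eq_prod,
          lintegral_prod_symm' f hf]

theorem setLIntegral_Ioi_setLIntegral_Ioc_comp_neg_smul_le {f : ℝ → E × ℝ → ℝ≥0∞}
    (hf : Measurable (Function.uncurry f)) {a : ℝ} (ha : 0 < a) (β M : ℝ) :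
    ∫⁻ τ in Set.Ioi a, ∫⁻ ζ in Set.Ioc 0 M,
        ENNReal.ofReal (ζ ^ (-β)) * ∫⁻ w : E, f ζ (-τ • w, ζ - τ * ζ) ≤
      ENNReal.ofReal (a ^ Module.finrank ℝ E)⁻¹ *
        ∫⁻ ζ in Set.Ioc 0 M, ENNReal.ofReal (ζ ^ (-(β + 1))) * ∫⁻ q, f ζ q := by
  have hsection : Measurable fun z : (ℝ × ℝ) × E =>
      f z.1.2 (-z.1.1 • z.2, z.1.2 - z.1.1 * z.1.2) :=
    hf.comp (by fun_prop : Measurable fun z : (ℝ × ℝ) × E =>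
      (z.1.2, (-z.1.1 • z.2, z.1.2 - z.1.1 * z.1.2)))
  have hmeas : Measurable fun z : ℝ × ℝ =>
      ENNReal.ofReal (z.2 ^ (-β)) * ∫⁻ w : E, f z.2 (-z.1 • w, z.2 - z.1 * z.2) :=
    Measurable.mul (by fun_prop) hsection.lintegral_prod_right'
  rw [lintegral_lintegral_swap hmeas.aemeasurable, ← lintegral_const_mul' _ _ ENNReal.ofReal_ne_top]
  refine setLIntegral_mono' measurableSet_Ioc fun ζ hζ => ?_
  have hζ0 : 0 < ζ := hζ.1
  have hfζ : Measurable (f ζ) := hf.of_uncurry_left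
  calc ∫⁻ τ in Set.Ioi a, ENNReal.ofReal (ζ ^ (-β)) * ∫⁻ w : E, f ζ (-τ • w, ζ - τ * ζ)
      ≤ ENNReal.ofReal (ζ ^ (-β)) *
          (ENNReal.ofReal ((a ^ Module.finrank ℝ E * ζ)⁻¹) * ∫⁻ q, f ζ q) := by
        rw [lintegral_const_mul' _ _ ENNReal.ofReal_ne_top]
        gcongr ENNReal.ofReal _ * ?_
        exact setLIntegral_Ioi_lintegral_comp_neg_smul_le ha hζ0 hfζ
    _ = ENNReal.ofReal (a ^ Module.finrank ℝ E)⁻¹ *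
          (ENNReal.ofReal (ζ ^ (-(β + 1))) * ∫⁻ q, f ζ q) := by
        rw [← mul_assoc, ← mul_assoc, ← ENNReal.ofReal_mul (by positivity),
          ← ENNReal.ofReal_mul (by positivity), mul_inv, neg_add, Real.rpow_add hζ0,
          Real.rpow_neg_one]
        ring_nf

theorem lintegral_sliceEnergy_one_sub_smul_le {u : E × ℝ → F} (hu : Continuous u) (p β M : ℝ)
    {ϑ τ : ℝ} (hτ0 : 0 < τ) (hτ1 : τ < 1) (hτϑ : τ ≤ 2 / 5 * ϑ) :
    ∫⁻ z, sliceEnergy u p ((1 - τ) • z) z ∂coneMeasure E β M ≤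
      ∫⁻ ζ in Set.Ioc 0 M, ENNReal.ofReal (ζ ^ (-β)) * ∫⁻ w : E,
        (stripeBall E M ϑ ζ).indicator (fun q => sliceEnergy u p q (0, ζ))
          (-τ • w, ζ - τ * ζ) := by
  rw [lintegral_coneMeasure_eq_setLIntegral_Ioc
    (measurable_sliceEnergy hu p (measurable_const_smul _) measurable_id')]
  refine setLIntegral_mono' measurableSet_Ioc fun ζ hζ => ?_
  gcongr ENNReal.ofReal _ * ?_
  refine (setLIntegral_mono' Metric.isOpen_ball.measurableSet fun w hw => ?_).trans
    (setLIntegral_le_lintegral (Metric.ball 0 (2 * ζ)) _)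
  rw [Set.indicator_of_mem (neg_smul_mem_stripeBall hτ0 hτ1 hτϑ hζ hw),
    sliceEnergy_one_sub_smul]

theorem setLIntegral_Ioo_lintegral_sliceEnergy_one_sub_smul_le {u : E × ℝ → F}
    (hu : Continuous u) (p β M : ℝ) {ϑ : ℝ} (hϑ0 : 0 < ϑ) (hϑ1 : ϑ ≤ 1) :
    ∫⁻ τ in Set.Ioo (ϑ / 5) (2 / 5 * ϑ),
        ∫⁻ z, sliceEnergy u p ((1 - τ) • z) z ∂coneMeasure E β M ≤
      ENNReal.ofReal ((ϑ / 5) ^ Module.finrank ℝ E)⁻¹ *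
        ∫⁻ ζ in Set.Ioc 0 M, ENNReal.ofReal (ζ ^ (-(β + 1))) *
          ∫⁻ q in stripeBall E M ϑ ζ, sliceEnergy u p q (0, ζ) := by
  have hmeas : Measurable (Function.uncurry fun ζ =>
      (stripeBall E M ϑ ζ).indicator fun q => sliceEnergy u p q (0, ζ)) :=
    (measurable_sliceEnergy hu p (f := Prod.snd) (g := fun z => (0, z.1)) measurable_snd
      (by fun_prop)).indicator (measurableSet_stripeBall_prod M ϑ)
  simp only [← lintegral_indicator (measurableSet_stripeBall M ϑ _)]
  refine le_trans ?_ (setLIntegral_Ioi_setLIntegral_Ioc_comp_neg_smul_le hmeas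
    (by positivity : 0 < ϑ / 5) β M)
  refine (setLIntegral_mono' measurableSet_Ioo fun τ hτ => ?_).trans
    (lintegral_mono_set Set.Ioo_subset_Ioi_self)
  exact lintegral_sliceEnergy_one_sub_smul_le hu p β M (by linarith [hτ.1])
    (by linarith [hτ.2]) hτ.2.le

end Averaging

theorem lintegral_setLIntegral_ofReal_norm_rpow_eq_setLIntegral_sliceMass {E F : Type*}
    [NormedAddCommGroup E] [MeasureSpace E] [BorelSpace E] [SFinite (volume : Measure E)]
    [NormedAddCommGroup F] {u : E × ℝ → F} (hu : Continuous u) {p : ℝ} (hp : 0 ≤ p) (S : Set ℝ) :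
    ∫⁻ x, ∫⁻ t in S, ENNReal.ofReal (‖u (x, t)‖ ^ p) = ∫⁻ t in S, sliceMass u p t := by
  simp only [ofReal_norm_rpow _ hp]
  exact lintegral_lintegral_swap (hu.enorm.measurable.pow_const p).aemeasurable

section TraceInequality

variable {E F : Type*} [NormedAddCommGroup E] [NormedSpace ℝ E] [FiniteDimensional ℝ E]
  [MeasureSpace E] [BorelSpace E] [(volume : Measure E).IsAddHaarMeasure] [NormedAddCommGroup F]

theorem setLIntegral_ofReal_rpow_neg_mul_eq_nonlocalEnergy {u : E × ℝ → F} (hu : Continuous u)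
    {p ϑ : ℝ} (hp : 0 ≤ p) (hϑ : 0 < ϑ) (γ M : ℝ) :
    ∫⁻ ζ in Set.Ioc 0 M, ENNReal.ofReal (ζ ^ (-γ)) *
        ∫⁻ q in stripeBall E M ϑ ζ, sliceEnergy u p q (0, ζ) =
      ENNReal.ofReal (ϑ ^ γ) * nonlocalEnergy u p γ M ϑ := by
  rw [nonlocalEnergy_eq_lintegral_sliceEnergy hu hp hϑ.le,
    ← lintegral_const_mul' _ _ ENNReal.ofReal_ne_top]
  refine setLIntegral_congr_fun measurableSet_Ioc fun ζ hζ => ?_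
  rw [← mul_assoc, ← ENNReal.ofReal_mul (by positivity), Real.mul_rpow hϑ.le hζ.1.le,
    ← mul_assoc, ← Real.rpow_add hϑ, add_neg_cancel, Real.rpow_zero, one_mul]

theorem ofReal_mul_coneEnergy_le_nonlocalEnergy {u : E × ℝ → F} (hu : Continuous u)
    {p β ϑ : ℝ} (hp : 1 ≤ p) (hβ : Module.finrank ℝ E + 1 < β) (hϑ0 : 0 < ϑ) (hϑ1 : ϑ ≤ 1)
    (M : ℝ) :
    ENNReal.ofReal (ϑ / 5) * coneEnergy u p β M ≤
      ENNReal.ofReal ((min ((β - (Module.finrank ℝ E + 1)) / p) 1 * (ϑ / 5)) ^ (-p)) *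
        (ENNReal.ofReal ((ϑ / 5) ^ Module.finrank ℝ E)⁻¹ *
          (ENNReal.ofReal (ϑ ^ (β + 1)) * nonlocalEnergy u p (β + 1) M ϑ)) := by
  have hp0 : 0 < p := one_pos.trans_le hp
  have hexponent : 0 < (β - (Module.finrank ℝ E + 1)) / p := div_pos (sub_pos.2 hβ) hp0
  rw [← setLIntegral_ofReal_rpow_neg_mul_eq_nonlocalEnergy hu hp0.le hϑ0]
  calc ENNReal.ofReal (ϑ / 5) * coneEnergy u p β M
      = ∫⁻ _ in Set.Ioo (ϑ / 5) (2 / 5 * ϑ), coneEnergy u p β M := by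
        rw [setLIntegral_const, Real.volume_Ioo, mul_comm]
        ring_nf
    _ ≤ ∫⁻ τ in Set.Ioo (ϑ / 5) (2 / 5 * ϑ),
          ENNReal.ofReal ((min ((β - (Module.finrank ℝ E + 1)) / p) 1 * (ϑ / 5)) ^ (-p)) *
            ∫⁻ z, sliceEnergy u p ((1 - τ) • z) z ∂coneMeasure E β M := by
        refine setLIntegral_mono' measurableSet_Ioo fun τ hτ => ?_
        have hτ0 : 0 < τ := by linarith [hτ.1]
        have hτ1 : τ < 1 := by linarith [hτ.2]
        refine (coneEnergy_le_lintegral_sliceEnergy_smul hu hp (sub_pos.2 hτ1) (by linarith)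
          β M).trans ?_
        gcongr
        exact inv_one_sub_one_sub_rpow_rpow_le hexponent hp0.le (by positivity) hτ.1.le hτ1.le
    _ ≤ _ := by
        rw [lintegral_const_mul' _ _ ENNReal.ofReal_ne_top]
        gcongr ENNReal.ofReal _ * ?_
        exact setLIntegral_Ioo_lintegral_sliceEnergy_one_sub_smul_le hu p β M hϑ0 hϑ1

theorem coneEnergy_le_nonlocalEnergy {u : E × ℝ → F} (hu : Continuous u) {p β ϑ : ℝ}
    (hp : 1 ≤ p) (hβ : Module.finrank ℝ E + 1 < β) (hϑ0 : 0 < ϑ) (hϑ1 : ϑ ≤ 1) (M : ℝ) :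
    coneEnergy u p β M ≤
      ENNReal.ofReal (min ((β - (Module.finrank ℝ E + 1)) / p) 1 ^ (-p) *
          5 ^ (Module.finrank ℝ E + 1 + p)) *
        (ENNReal.ofReal (ϑ ^ (β - Module.finrank ℝ E - p)) *
          nonlocalEnergy u p (β + 1) M ϑ) := by
  set n := Module.finrank ℝ E
  set b := min ((β - (n + 1)) / p) 1
  have hb : 0 < b := lt_min (div_pos (sub_pos.2 hβ) (one_pos.trans_le hp)) one_pos
  have hconst : (b * (ϑ / 5)) ^ (-p) * (((ϑ / 5) ^ n)⁻¹ * ϑ ^ (β + 1)) =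
      ϑ / 5 * (b ^ (-p) * 5 ^ (n + 1 + p) * ϑ ^ (β - n - p)) := by
    have hsplit : ϑ ^ (β + 1) = ϑ ^ (β - n - p) * (ϑ ^ n * ϑ * ϑ ^ p) := by
      rw [← Real.rpow_natCast, ← Real.rpow_add_one hϑ0.ne', ← Real.rpow_add hϑ0,
        ← Real.rpow_add hϑ0]
      ring_nf
    rw [hsplit, Real.mul_rpow hb.le (by positivity), Real.rpow_neg (by positivity : 0 ≤ ϑ / 5),
      Real.div_rpow hϑ0.le (by norm_num), div_pow, Real.rpow_add (by norm_num),
      Real.rpow_add_one (by norm_num), Real.rpow_natCast]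
    field_simp
  have ha0 : ENNReal.ofReal (ϑ / 5) ≠ 0 := (ENNReal.ofReal_pos.2 (by positivity)).ne'
  rw [← ENNReal.mul_le_mul_iff_right ha0 ENNReal.ofReal_ne_top]
  calc ENNReal.ofReal (ϑ / 5) * coneEnergy u p β M
      ≤ ENNReal.ofReal ((b * (ϑ / 5)) ^ (-p)) * (ENNReal.ofReal ((ϑ / 5) ^ n)⁻¹ *
          (ENNReal.ofReal (ϑ ^ (β + 1)) * nonlocalEnergy u p (β + 1) M ϑ)) :=
        ofReal_mul_coneEnergy_le_nonlocalEnergy hu hp hβ hϑ0 hϑ1 M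
    _ = ENNReal.ofReal ((b * (ϑ / 5)) ^ (-p) * (((ϑ / 5) ^ n)⁻¹ * ϑ ^ (β + 1))) *
          nonlocalEnergy u p (β + 1) M ϑ := by
        rw [ENNReal.ofReal_mul (by positivity), ENNReal.ofReal_mul (by positivity), mul_assoc,
          mul_assoc]
    _ = _ := by
        rw [hconst, ENNReal.ofReal_mul (by positivity), ENNReal.ofReal_mul (by positivity),
          mul_assoc, mul_assoc]

theorem exists_lintegral_trace_le_coneEnergy {p β : ℝ} (hp : 1 ≤ p)
    (hβ : Module.finrank ℝ E + 1 < β) :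
    ∃ K : ℝ≥0∞, K ≠ ∞ ∧ ∀ u : E × ℝ → F, Continuous u → ∀ M : ℝ, 0 < M →
      ∫⁻ x, ∫⁻ y, ENNReal.ofReal (‖u (x, 0) - u (y, 0)‖ ^ p / dist x y ^ (β - 1)) ≤
        K * (ENNReal.ofReal (M ^ (Module.finrank ℝ E - β)) *
          (∫⁻ t in Set.Ioc 0 M, sliceMass u p t) + coneEnergy u p β M) := by
  have hβ0 : 0 ≤ β := by linarith [(Nat.cast_nonneg _ : (0 : ℝ) ≤ Module.finrank ℝ E)]
  let tail : ℝ≥0∞ := ∫⁻ h in (Metric.ball (0 : E) 1)ᶜ, ENNReal.ofReal (‖h‖ ^ (-(β - 1)))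
  have htail : tail ≠ ∞ := (setLIntegral_compl_ball_one_norm_rpow_neg_lt_top (by linarith)).ne
  let near : ℝ≥0∞ := 2 ^ (p + (β + Module.finrank ℝ E))
  let far : ℝ≥0∞ := 2 ^ p * tail * (2 ^ (p - 1) *
    (2 ^ β * (volume (Metric.ball (0 : E) 1))⁻¹ + 2 ^ (β - Module.finrank ℝ E)))
  have hω : (volume (Metric.ball (0 : E) 1))⁻¹ ≠ ∞ :=
    ENNReal.inv_ne_top.2 (Metric.measure_ball_pos _ _ one_pos).ne'
  refine ⟨near + far, by finiteness, fun u hu M hM => ?_⟩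
  obtain ⟨r, rfl⟩ : ∃ r, M = 2 * r := ⟨M / 2, by ring⟩
  have hr : 0 < r := by linarith
  rw [lintegral_trace_eq_lintegral_sliceEnergy hu (by linarith), add_mul,
    ← lintegral_add_compl _ (Metric.isOpen_ball : IsOpen (Metric.ball (0 : E) r)).measurableSet]
  refine add_le_add ?_ ?_
  · rw [neg_sub]
    exact (setLIntegral_ball_sliceEnergy_le_coneEnergy hu hp hβ0 r).trans
      (mul_le_mul_right le_add_self _)
  · refine (setLIntegral_compl_ball_sliceEnergy_le hu hp hr (β - 1)).trans ?_
    rw [mul_assoc (2 ^ p * tail), sub_sub_eq_add_sub]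
    exact mul_le_mul_right (ofReal_rpow_mul_sliceMass_zero_le hu hp hβ0 hr) _

theorem exists_lintegral_trace_le_nonlocalEnergy {p β : ℝ} (hp : 1 ≤ p)
    (hβ : Module.finrank ℝ E + 1 < β) :
    ∃ C : ℝ, 0 < C ∧ ∀ u : E × ℝ → F, Continuous u → ∀ M : ℝ, 0 < M → ∀ ϑ : ℝ, 0 < ϑ → ϑ ≤ 1 →
      ∫⁻ x, ∫⁻ y, ENNReal.ofReal (‖u (x, 0) - u (y, 0)‖ ^ p / dist x y ^ (β - 1)) ≤
        ENNReal.ofReal C * (ENNReal.ofReal (M ^ (Module.finrank ℝ E - β)) *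
          (∫⁻ t in Set.Ioc 0 M, sliceMass u p t) +
          ENNReal.ofReal (ϑ ^ (β - Module.finrank ℝ E - p)) * nonlocalEnergy u p (β + 1) M ϑ) := by
  obtain ⟨K, hK, htrace⟩ := exists_lintegral_trace_le_coneEnergy (E := E) (F := F) hp hβ
  let A : ℝ := min ((β - (Module.finrank ℝ E + 1)) / p) 1 ^ (-p) *
    5 ^ (Module.finrank ℝ E + 1 + p)
  have hA : 0 ≤ A := by
    have : 0 < (β - (Module.finrank ℝ E + 1)) / p := div_pos (sub_pos.2 hβ) (by linarith)
    positivity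
  refine ⟨K.toReal * (1 + A) + 1, by positivity, fun u hu M hM ϑ hϑ0 hϑ1 => ?_⟩
  have hconst : K * ENNReal.ofReal (1 + A) ≤ ENNReal.ofReal (K.toReal * (1 + A) + 1) := by
    rw [← ENNReal.ofReal_toReal hK, ← ENNReal.ofReal_mul ENNReal.toReal_nonneg,
      ENNReal.toReal_ofReal ENNReal.toReal_nonneg]
    exact ENNReal.ofReal_le_ofReal (by linarith)
  refine (htrace u hu M hM).trans ?_
  refine le_trans ?_ (mul_le_mul_left hconst _)
  rw [mul_assoc, mul_add (ENNReal.ofReal (1 + A))]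
  refine mul_le_mul_right (add_le_add ?_ ?_) _
  · exact le_mul_of_one_le_left zero_le (ENNReal.one_le_ofReal.2 (by linarith))
  · refine (coneEnergy_le_nonlocalEnergy hu hp hβ hϑ0 hϑ1 M).trans ?_
    exact mul_le_mul_left (ENNReal.ofReal_le_ofReal (by linarith)) _

end TraceInequality

theorem stmt_13_general {E F : Type*} [NormedAddCommGroup E] [NormedSpace ℝ E]
    [FiniteDimensional ℝ E] [MeasureSpace E] [BorelSpace E]
    [(volume : Measure E).IsAddHaarMeasure] [NormedAddCommGroup F] {d : ℕ}
    (hd : Module.finrank ℝ E + 1 = d) {p s : ℝ} (hp : 1 ≤ p) (hsp : 1 < s * p) :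
    ∃ C : ℝ, 0 < C ∧ ∀ M : ℝ, 0 < M → ∀ ϑ : ℝ, 0 < ϑ → ϑ ≤ 1 → ∀ u : E × ℝ → F,
      ContinuousOn u {q | q.2 ∈ Set.Icc 0 M} →
      ∫⁻ x, ∫⁻ y, ENNReal.ofReal
          (‖u (x, 0) - u (y, 0)‖ ^ p / dist x y ^ ((d : ℝ) + p * s - 2)) ≤
        ENNReal.ofReal C * (ENNReal.ofReal (M ^ (-(p * s))) *
            (∫⁻ x, ∫⁻ t in Set.Ioc 0 M, ENNReal.ofReal (‖u (x, t)‖ ^ p)) +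
          ENNReal.ofReal (ϑ ^ (p * s - p)) * nonlocalEnergy u p ((d : ℝ) + p * s) M ϑ) := by
  obtain ⟨C, hC, htrace⟩ := exists_lintegral_trace_le_nonlocalEnergy (E := E) (F := F)
    (β := Module.finrank ℝ E + p * s) hp (by linarith)
  refine ⟨C, hC, fun M hM ϑ hϑ0 hϑ1 u hu => ?_⟩
  let v (q : E × ℝ) : F := u (q.1, Set.projIcc 0 M hM.le q.2)
  have hv : Continuous v := hu.comp_continuous
    (continuous_fst.prodMk (continuous_subtype_val.comp (continuous_projIcc.comp continuous_snd)))
    fun q => (Set.projIcc 0 M hM.le q.2).2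
  have huv : Set.EqOn u v {q | q.2 ∈ Set.Icc 0 M} := fun q hq => by
    simp only [v, Set.projIcc_of_mem hM.le hq, Prod.mk.eta]
  have hzero (x : E) : u (x, 0) = v (x, 0) := huv (Set.left_mem_Icc.2 hM.le)
  have hmass : ∫⁻ x, ∫⁻ t in Set.Ioc 0 M, ENNReal.ofReal (‖u (x, t)‖ ^ p) =
      ∫⁻ t in Set.Ioc 0 M, sliceMass v p t := by
    rw [← lintegral_setLIntegral_ofReal_norm_rpow_eq_setLIntegral_sliceMass hv (by linarith)]
    refine lintegral_congr fun x => setLIntegral_congr_fun measurableSet_Ioc fun t ht => ?_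
    simp only [huv (show (x, t).2 ∈ Set.Icc 0 M from Set.Ioc_subset_Icc_self ht)]
  have hdim : (d : ℝ) = Module.finrank ℝ E + 1 := mod_cast hd.symm
  rw [hmass, nonlocalEnergy_congr (v := v) fun q hq => huv (Set.Ioc_subset_Icc_self hq)]
  simp only [hzero, hdim]
  convert htrace v hv M hM ϑ hϑ0 hϑ1 using 4 <;> ring_nf

/-- Gagliardo `W^{s-1/p,p}(ℝ^{d-1})` seminorm bound for the trace on
`Γ = ℝ^{d-1} × {0}` of a Lipschitz function on the stripe `ℝ^{d-1} × (0,M]`,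
with a constant independent of `M` and `ϑ`. -/
theorem stmt_13 (d : ℕ) (hd : 2 ≤ d) (p s : ℝ) (hp : 1 ≤ p) (hs0 : 0 < s)
    (hs1 : s ≤ 1) (hsp : 1 < s * p) :
    ∃ C : ℝ, 0 < C ∧ ∀ (M : ℝ), 0 < M → ∀ (ϑ : ℝ), 0 < ϑ → ϑ ≤ 1 →
      ∀ (u : EuclideanSpace ℝ (Fin (d - 1)) → ℝ → ℝ) (K : NNReal),
        LipschitzOnWith K (fun q : EuclideanSpace ℝ (Fin (d - 1)) × ℝ => u q.1 q.2)
          {q : EuclideanSpace ℝ (Fin (d - 1)) × ℝ | q.2 ∈ Set.Icc 0 M} →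
        stripeSemi d (Set.Ioc 0 M) ϑ p s u ≠ ⊤ →
        (∫⁻ x' : EuclideanSpace ℝ (Fin (d - 1)),
            ∫⁻ y' : EuclideanSpace ℝ (Fin (d - 1)),
              ENNReal.ofReal
                (|u x' 0 - u y' 0| ^ p / dist x' y' ^ ((d : ℝ) + p * s - 2))) ≤
          ENNReal.ofReal C *
            (ENNReal.ofReal (M ^ (-(p * s))) * stripeLp d (Set.Ioc 0 M) p u +
              ENNReal.ofReal (ϑ ^ (p * s - p)) *
                stripeSemi d (Set.Ioc 0 M) ϑ p s u) := by
  obtain ⟨C, hC, htrace⟩ := stmt_13_general (E := EuclideanSpace ℝ (Fin (d - 1))) (F := ℝ)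
    (d := d) (by rw [finrank_euclideanSpace_fin]; omega) hp hsp
  exact ⟨C, hC, fun M hM ϑ hϑ0 hϑ1 u K hu _ =>
    htrace M hM ϑ hϑ0 hϑ1 (fun q => u q.1 q.2) hu.continuousOn⟩
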